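/- arXiv:1612.01732 — 8 statements merged into one kernel-verified Lean document; each statement's English description precedes it below -/
import Mathlib

section
/- Suppose Λ is a finite simple graph whose complement Λᶜ is a linear forest, Γ is a finite simple graph, and v is a vertex of Γ. If Λ embeds into the double D_v(Γ) of Γ along the star of v as a full (induced) subgraph, then Λ embeds into Γ as a full (induced) subgraph. -/
open SimpleGraph

/-- The set of commutator relations of a graph: one commutator for each edge. -/
def raagRels {V : Type} (G : SimpleGraph V) : Set (FreeGroup V) :=
  {r | ∃ u v : V, G.Adj u v ∧
    r = FreeGroup.of u * FreeGroup.of v * (FreeGroup.of u)⁻¹ * (FreeGroup.of v)⁻¹}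

/-- The right-angled Artin group `A(G)` of a graph `G`. -/
abbrev RAAG {V : Type} (G : SimpleGraph V) : Type := PresentedGroup (raagRels G)

/-- `G(Γ) = A(Γᶜ)`, the RAAG on the complement graph. -/
abbrev GG {V : Type} (G : SimpleGraph V) : Type := RAAG Gᶜ

/-- A linear forest: an acyclic graph all of whose vertices have degree at most 2. -/
def IsLinearForest {V : Type} (G : SimpleGraph V) : Prop :=
  G.IsAcyclic ∧ ∀ v : V, (G.neighborSet v).ncard ≤ 2

/-- The star of a vertex: the vertex together with its neighbours. -/
def starSet {V : Type} (G : SimpleGraph V) (v : V) : Set V :=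
  insert v (G.neighborSet v)

/-- The double `D_v(G)` of `G` along the star of `v`: original vertices together with
copies of the vertices outside the star. -/
def GraphDouble {V : Type} (G : SimpleGraph V) (v : V) :
    SimpleGraph (V ⊕ {w : V // w ∉ starSet G v}) :=
  SimpleGraph.fromRel (fun x y =>
    match x, y with
    | Sum.inl a, Sum.inl b => G.Adj a b
    | Sum.inr a, Sum.inr b => G.Adj a.1 b.1
    | Sum.inl a, Sum.inr b => a ∈ starSet G v ∧ G.Adj a b.1
    | Sum.inr _, Sum.inl _ => False)

/-- Subdivision of the edge `[v,w]` of `Λ`, with `none` as the new vertex. -/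
def SubdivEdge {V : Type} (Λ : SimpleGraph V) (v w : V) : SimpleGraph (Option V) :=
  SimpleGraph.fromRel (fun x y =>
    match x, y with
    | some a, some b => Λ.Adj a b ∧ ¬((a = v ∧ b = w) ∨ (a = w ∧ b = v))
    | some a, none => a = v ∨ a = w
    | none, some _ => False
    | none, none => False)

/-- The graph `Λ_u⁻(w₁,w₂)`, with `none` as the new vertex `v`. -/
def MinusGraph {V : Type} (Λ : SimpleGraph V) (u w₁ w₂ : V) : SimpleGraph (Option V) :=
  SimpleGraph.fromRel (fun x y =>
    match x, y with
    | some a, some b => Λ.Adj a b ∧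
        ¬((a = u ∧ b = w₁) ∨ (a = w₁ ∧ b = u) ∨ (a = u ∧ b = w₂) ∨ (a = w₂ ∧ b = u))
    | some a, none => a = w₁ ∨ a = u ∨ a = w₂
    | none, some _ => False
    | none, none => False)

/-- The graph `Λ_u⁺(w₁,w₂)`: `Λ_u⁻(w₁,w₂)` with the edge `[u,w₂]` added back. -/
def PlusGraph {V : Type} (Λ : SimpleGraph V) (u w₁ w₂ : V) : SimpleGraph (Option V) :=
  SimpleGraph.fromRel (fun x y =>
    (MinusGraph Λ u w₁ w₂).Adj x y ∨ (x = some u ∧ y = some w₂))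


theorem aux_no_triangle {U : Type} {L : SimpleGraph U} (hac : L.IsAcyclic) {x y z : U}
    (h1 : L.Adj x y) (h2 : L.Adj y z) (h3 : L.Adj x z) : False := by
  have hp : (Walk.cons h1 (Walk.cons h2 Walk.nil)).IsPath := by
    simp [Walk.cons_isPath_iff, h1.ne, h2.ne, h3.ne]
  have hq : (Walk.cons h3 Walk.nil).IsPath := by
    simp [Walk.cons_isPath_iff, h3.ne]
  have := congrArg (fun p : L.Path x z => p.1.length) (hac.path_unique ⟨_, hp⟩ ⟨_, hq⟩)
  simp at this

theorem aux_no_square {U : Type} {L : SimpleGraph U} (hac : L.IsAcyclic) {a a' b b' : U}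
    (ha : a ≠ a') (hb : b ≠ b')
    (h1 : L.Adj a b) (h2 : L.Adj a b') (h3 : L.Adj a' b) (h4 : L.Adj a' b') : False := by
  have hp : (Walk.cons h1 (Walk.cons h3.symm Walk.nil)).IsPath := by
    simp [Walk.cons_isPath_iff, h1.ne, h3.ne', ha]
  have hq : (Walk.cons h2 (Walk.cons h4.symm Walk.nil)).IsPath := by
    simp [Walk.cons_isPath_iff, h2.ne, h4.ne', ha]
  have := congrArg (fun p : L.Path a a' => p.1.support) (hac.path_unique ⟨_, hp⟩ ⟨_, hq⟩)
  simp at this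
  exact hb this

/-- Extending a path in an acyclic graph. -/
theorem aux_extend {U : Type} {L : SimpleGraph U} (hac : L.IsAcyclic) {a b d r : U}
    (hba : L.Adj b a) (q : L.Walk a r) (hp : (Walk.cons hba q).IsPath)
    (hdb : L.Adj d b) (hda : d ≠ a) : (Walk.cons hdb (Walk.cons hba q)).IsPath := by
  classical
  rw [Walk.cons_isPath_iff]
  refine ⟨hp, fun hd => ?_⟩
  have hdq : d ∈ q.support := by
    rw [Walk.support_cons, List.mem_cons] at hd
    exact hd.resolve_left hdb.ne
  rw [Walk.cons_isPath_iff] at hp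
  have h1 : (Walk.cons hba (q.takeUntil d hdq)).IsPath := by
    rw [Walk.cons_isPath_iff]
    exact ⟨hp.1.takeUntil hdq, fun h => hp.2 (q.support_takeUntil_subset_support hdq h)⟩
  have h2 : (Walk.cons hdb.symm Walk.nil).IsPath := by
    simp [Walk.cons_isPath_iff, hdb.ne']
  have := congrArg (fun p : L.Path b d => p.1.length) (hac.path_unique ⟨_, h1⟩ ⟨_, h2⟩)
  simp at this
  exact hda this.symm

theorem aux_shift {U V : Type} [Fintype U] {L : SimpleGraph U} {G : SimpleGraph V}
    (hac : L.IsAcyclic)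
    (hdeg : ∀ x y z w, L.Adj x y → L.Adj x z → L.Adj x w → y = z ∨ y = w ∨ z = w) :
    ∀ (n : ℕ) (a b r : U) (hba : L.Adj b a) (q : L.Walk a r), (Walk.cons hba q).IsPath →
      Fintype.card U ≤ n + q.length →
      ∀ (φ : U → V) (v : V), Function.Injective φ → (∀ x, φ x ≠ v) →
      (∀ x, G.Adj v (φ x) ↔ x = a ∨ x = b) →
      (∀ x y, G.Adj (φ x) (φ y) ↔ L.Adj x y ∧ ¬(x = a ∧ y = b) ∧ ¬(x = b ∧ y = a)) →
      ∃ ψ : U → V, Function.Injective ψ ∧ ∀ x y, G.Adj (ψ x) (ψ y) ↔ L.Adj x y := by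
  classical
  intro n
  induction n with
  | zero =>
    intro a b r hba q hp hc
    have := hp.length_lt
    simp at this hc
    omega
  | succ n ih =>
    intro a b r hba q hp hc φ v hinj hv hadj hφ
    have hinj' : Function.Injective (Function.update φ b v) := by
      intro x y hxy
      by_cases hx : x = b <;> by_cases hy : y = b <;>
        simp [Function.update_apply, hx, hy] at hxy ⊢
      · exact (hv _ hxy.symm).elim
      · exact (hv _ hxy).elim
      · exact hinj hxy
    by_cases hd : ∃ d, L.Adj d b ∧ d ≠ a
    · obtain ⟨d, hdb, hda⟩ := hd
      have hb : ∀ x, L.Adj b x ↔ x = a ∨ x = d := by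
        intro x
        constructor
        · intro h
          rcases hdeg b x a d h hba hdb.symm with h | h | h
          · exact Or.inl h
          · exact Or.inr h
          · exact absurd h.symm hda
        · rintro (rfl | rfl)
          · exact hba
          · exact hdb.symm
      have hb' : ∀ x, L.Adj x b ↔ x = a ∨ x = d := fun x => by rw [L.adj_comm, hb]
      have hab := hba.ne
      have hdb' := hdb.ne
      have hnad : ¬ L.Adj a d := fun h => aux_no_triangle hac hba h hdb.symm
      refine ih b d r hdb (Walk.cons hba q) (aux_extend hac hba q hp hdb hda) ?_
        (Function.update φ b v) (φ b) hinj' ?_ ?_ ?_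
      · simp; omega
      · intro x
        by_cases hx : x = b
        · subst hx; simpa using (hv x).symm
        · simpa [Function.update_apply, hx] using fun h => hx (hinj h)
      · intro x
        by_cases hx : x = b
        · subst hx; simpa using ((hadj x).mpr (Or.inr rfl)).symm
        · simp only [Function.update_apply, hx, if_false, hφ, hb]
          grind
      · intro x y
        by_cases hx : x = b <;> by_cases hy : y = b
        · subst hx; subst hy; simp
        · subst hx
          simp only [Function.update_apply, hy, if_true, if_false, hadj, hb]
          grind
        · subst hy
          simp only [Function.update_apply, hx, if_true, if_false, G.adj_comm _ v, hadj, hb']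
          grind
        · simp only [Function.update_apply, hx, hy, if_false, hφ]
          grind
    · have hb : ∀ x, L.Adj b x ↔ x = a := by
        intro x
        refine ⟨fun h => ?_, fun h => h ▸ hba⟩
        by_contra hxa
        exact hd ⟨x, h.symm, hxa⟩
      have hb' : ∀ x, L.Adj x b ↔ x = a := fun x => by rw [L.adj_comm, hb]
      refine ⟨Function.update φ b v, hinj', fun x y => ?_⟩
      by_cases hx : x = b <;> by_cases hy : y = b
      · subst hx; subst hy; simp
      · subst hx
        simp only [Function.update_apply, hy, if_true, if_false, hadj, hb]
        grind
      · subst hy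
        simp only [Function.update_apply, hx, if_true, if_false, G.adj_comm _ v, hadj, hb']
        grind
      · simp only [Function.update_apply, hx, hy, if_false, hφ]
        grind

/-- Data of an induced embedding of `L` into the complement of a double. -/
structure AuxData {U V : Type} (L : SimpleGraph U) (G : SimpleGraph V) (v : V)
    (π : U → V) (A B : U → Prop) : Prop where
  disj : ∀ x, A x → ¬ B x
  adjv : ∀ x, G.Adj v (π x) ↔ A x ∨ B x
  join : ∀ x y, A x → B y → L.Adj x y
  adj : ∀ x y, ¬(A x ∧ B y) → ¬(B x ∧ A y) → (L.Adj x y ↔ G.Adj (π x) (π y))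
  inj : ∀ x y, ¬(A x ∧ B y) → ¬(B x ∧ A y) → π x = π y → x = y

theorem AuxData.swap {U V : Type} {L : SimpleGraph U} {G : SimpleGraph V} {v : V}
    {π : U → V} {A B : U → Prop} (h : AuxData L G v π A B) : AuxData L G v π B A where
  disj x hb ha := h.disj x ha hb
  adjv x := (h.adjv x).trans or_comm
  join x y hx hy := (h.join y x hy hx).symm
  adj x y h1 h2 := h.adj x y h2 h1
  inj x y h1 h2 := h.inj x y h2 h1

theorem AuxData.ne_v {U V : Type} {L : SimpleGraph U} {G : SimpleGraph V} {v : V}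
    {π : U → V} {A B : U → Prop} (h : AuxData L G v π A B) (hac : L.IsAcyclic)
    {a b : U} (ha : A a) (hb : B b) (x : U) : π x ≠ v := by
  intro hx
  have hn : ¬ (A x ∨ B x) := by rw [← h.adjv, hx]; exact G.irrefl
  push Not at hn
  have h1 : L.Adj x a := by
    rw [h.adj x a (fun k => hn.1 k.1) (fun k => hn.2 k.1), hx, h.adjv]; exact Or.inl ha
  have h2 : L.Adj x b := by
    rw [h.adj x b (fun k => hn.1 k.1) (fun k => hn.2 k.1), hx, h.adjv]; exact Or.inr hb
  exact aux_no_triangle hac h1 (h.join a b ha hb) h2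

theorem AuxData.replace {U V : Type} {L : SimpleGraph U} {G : SimpleGraph V} {v : V}
    {π : U → V} {A B : U → Prop} (h : AuxData L G v π A B) (hac : L.IsAcyclic)
    {a b : U} (ha : A a) (hb : B b) (hA : ∀ x, A x → x = a) (hN : ∀ x, L.Adj a x → B x) :
    ∃ ψ : U → V, Function.Injective ψ ∧ ∀ x y, G.Adj (ψ x) (ψ y) ↔ L.Adj x y := by
  classical
  have hv := h.ne_v hac ha hb
  have key : ∀ x, x ≠ a → (G.Adj v (π x) ↔ L.Adj a x) := by
    intro x hx
    rw [h.adjv]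
    exact ⟨fun k => h.join a x ha (k.resolve_left fun k => hx (hA x k)), fun k => Or.inr (hN x k)⟩
  refine ⟨Function.update π a v, fun x y hxy => ?_, fun x y => ?_⟩
  · by_cases hx : x = a <;> by_cases hy : y = a <;>
      simp [Function.update_apply, hx, hy] at hxy ⊢
    · exact (hv _ hxy.symm).elim
    · exact (hv _ hxy).elim
    · exact h.inj x y (fun k => hx (hA x k.1)) (fun k => hy (hA y k.2)) hxy
  · by_cases hx : x = a <;> by_cases hy : y = a
    · subst hx; subst hy; simp
    · subst hx
      simp only [Function.update_apply, hy, if_true, if_false]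
      exact key y hy
    · subst hy
      simp only [Function.update_apply, hx, if_true, if_false]
      rw [G.adj_comm, L.adj_comm]
      exact key x hx
    · simp only [Function.update_apply, hx, hy, if_false]
      exact (h.adj x y (fun k => hx (hA x k.1)) (fun k => hy (hA y k.2))).symm

theorem AuxData.of_unique {U V : Type} [Fintype U] {L : SimpleGraph U} {G : SimpleGraph V} {v : V}
    {π : U → V} {A B : U → Prop} (h : AuxData L G v π A B) (hac : L.IsAcyclic)
    (hdeg : ∀ x y z w, L.Adj x y → L.Adj x z → L.Adj x w → y = z ∨ y = w ∨ z = w)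
    {a b : U} (ha : A a) (hb : B b) (hA : ∀ x, A x → x = a) :
    ∃ ψ : U → V, Function.Injective ψ ∧ ∀ x y, G.Adj (ψ x) (ψ y) ↔ L.Adj x y := by
  have hab := h.join a b ha hb
  by_cases hB : ∀ x, B x → x = b
  swap
  · push Not at hB
    obtain ⟨b', hb', hne⟩ := hB
    refine h.replace hac ha hb hA fun x hx => ?_
    rcases hdeg a x b b' hx hab (h.join a b' ha hb') with k | k | k
    · exact k ▸ hb
    · exact k ▸ hb'
    · exact absurd k.symm hne
  by_cases hN : ∀ x, L.Adj a x → B x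
  · exact h.replace hac ha hb hA hN
  by_cases hN' : ∀ x, L.Adj b x → A x
  · exact h.swap.replace hac hb ha hB hN'
  push Not at hN
  obtain ⟨c, hac', hcB⟩ := hN
  have hcA : ¬ A c := fun k => hac'.ne (hA c k).symm
  have hne : π a ≠ π b := by
    intro k
    have h1 : L.Adj b c := by
      rw [h.adj b c (fun k => hcB k.2) (fun k => hcA k.2), ← k,
        ← h.adj a c (fun k => hcB k.2) (fun k => hcA k.2)]
      exact hac'
    exact aux_no_triangle hac hab h1 hac'
  have hinj : Function.Injective π := by
    intro x y hxy
    by_cases h1 : A x ∧ B y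
    · rw [hA x h1.1, hB y h1.2] at hxy; exact absurd hxy hne
    by_cases h2 : B x ∧ A y
    · rw [hB x h2.1, hA y h2.2] at hxy; exact absurd hxy.symm hne
    exact h.inj x y h1 h2 hxy
  have eA : ∀ x, A x ↔ x = a := fun x => ⟨hA x, fun k => k ▸ ha⟩
  have eB : ∀ x, B x ↔ x = b := fun x => ⟨hB x, fun k => k ▸ hb⟩
  have hadj := h.adj
  simp only [eA, eB] at hadj
  by_cases hG : G.Adj (π a) (π b)
  · refine ⟨π, hinj, fun x y => ?_⟩
    by_cases h1 : x = a ∧ y = b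
    · rw [h1.1, h1.2]; exact iff_of_true hG hab
    by_cases h2 : x = b ∧ y = a
    · rw [h2.1, h2.2]; exact iff_of_true hG.symm hab.symm
    exact (hadj x y h1 h2).symm
  · refine aux_shift hac hdeg (Fintype.card U) a b a hab.symm Walk.nil ?_ (by simp) π v hinj
      (h.ne_v hac ha hb) (fun x => by rw [h.adjv, eA, eB]) fun x y => ?_
    · simp [Walk.cons_isPath_iff, hab.ne']
    · by_cases h1 : x = a ∧ y = b
      · rw [h1.1, h1.2]; simp [hG]
      by_cases h2 : x = b ∧ y = a
      · rw [h2.1, h2.2]; simp [G.adj_comm (π b), hG]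
      rw [← hadj x y h1 h2]
      simp [h1, h2]

theorem AuxData.main {U V : Type} [Fintype U] {L : SimpleGraph U} {G : SimpleGraph V} {v : V}
    {π : U → V} {A B : U → Prop} (h : AuxData L G v π A B) (hac : L.IsAcyclic)
    (hdeg : ∀ x y z w, L.Adj x y → L.Adj x z → L.Adj x w → y = z ∨ y = w ∨ z = w) :
    ∃ ψ : U → V, Function.Injective ψ ∧ ∀ x y, G.Adj (ψ x) (ψ y) ↔ L.Adj x y := by
  by_cases hE : (∃ a, A a) ∧ (∃ b, B b)
  · obtain ⟨⟨a, ha⟩, b, hb⟩ := hE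
    by_cases hA : ∀ x, A x → x = a
    · exact h.of_unique hac hdeg ha hb hA
    by_cases hB : ∀ x, B x → x = b
    · exact h.swap.of_unique hac hdeg hb ha hB
    push Not at hA hB
    obtain ⟨a', ha', hna⟩ := hA
    obtain ⟨b', hb', hnb⟩ := hB
    exact (aux_no_square hac hna hnb (h.join _ _ ha' hb') (h.join _ _ ha' hb)
      (h.join _ _ ha hb') (h.join _ _ ha hb)).elim
  · have h1 : ∀ x y, ¬(A x ∧ B y) := fun x y k => hE ⟨⟨x, k.1⟩, y, k.2⟩
    exact ⟨π, fun x y => h.inj x y (h1 x y) (fun k => h1 y x k.symm),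
      fun x y => (h.adj x y (h1 x y) (fun k => h1 y x k.symm)).symm⟩

/-- If `Λᶜ` is a linear forest and `Λ` is an induced subgraph of the double `D_v(Γ)`,
then `Λ` is an induced subgraph of `Γ`. -/
theorem statement10 {U V : Type} [Fintype U] [Fintype V]
    (Λ : SimpleGraph U) (Γ : SimpleGraph V) (hΛ : IsLinearForest Λᶜ) (v : V)
    (h : Nonempty (Λ ↪g GraphDouble Γ v)) :
    Nonempty (Λ ↪g Γ) := by
  obtain ⟨f⟩ := h
  have hac := hΛ.1
  have hdeg : ∀ x y z w, Λᶜ.Adj x y → Λᶜ.Adj x z → Λᶜ.Adj x w → y = z ∨ y = w ∨ z = w := by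
    intro x y z w hy hz hw
    by_contra hcon
    push Not at hcon
    have h3 : ({y, z, w} : Set U).ncard = 3 := by
      rw [Set.ncard_eq_three]
      exact ⟨y, z, w, hcon.1, hcon.2.1, hcon.2.2, rfl⟩
    have hsub : ({y, z, w} : Set U) ⊆ Λᶜ.neighborSet x := by
      rintro t (rfl | rfl | rfl) <;> assumption
    have := Set.ncard_le_ncard hsub (Set.toFinite _)
    have := hΛ.2 x
    omega
  have hs : ∀ w, w ∉ starSet Γ v ↔ Γᶜ.Adj v w := by
    intro w
    simp [starSet, eq_comm]
  have hD : AuxData Λᶜ Γᶜ v (fun x => Sum.elim id Subtype.val (f x))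
      (fun x => ∃ w, f x = Sum.inl w ∧ w ∉ starSet Γ v)
      (fun x => ∃ w, f x = Sum.inr w) := by
    have hf : ∀ x y, Λᶜ.Adj x y ↔ f x ≠ f y ∧ ¬ (GraphDouble Γ v).Adj (f x) (f y) := by
      intro x y
      rw [compl_adj, f.map_adj_iff, f.injective.ne_iff]
    constructor
    · rintro x ⟨w, hw, -⟩ ⟨w', hw'⟩
      simp [hw] at hw'
    · intro x
      rcases hx : f x with w | w
      · simp [hx, ← hs]
      · simpa [hx, ← hs] using w.2
    · rintro x y ⟨w, hw, hw'⟩ ⟨u, hu⟩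
      rw [hf, hw, hu]
      simp [GraphDouble, hw']
    · intro x y h1 h2
      rw [hf]
      rcases hx : f x with w | w <;> rcases hy : f y with u | u
      · simp +contextual [GraphDouble, Γ.adj_comm u w]
      · have hw : w ∈ starSet Γ v := by
          by_contra k
          exact h1 ⟨⟨w, hx, k⟩, u, hy⟩
        have : w ≠ u.1 := fun k => u.2 (k ▸ hw)
        simp [GraphDouble, hw, this]
      · have hw : u ∈ starSet Γ v := by
          by_contra k
          exact h2 ⟨⟨w, hx⟩, u, hy, k⟩
        have : w.1 ≠ u := fun k => w.2 (k ▸ hw)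
        simp [GraphDouble, hw, this, Γ.adj_comm u]
      · simp +contextual [GraphDouble, Γ.adj_comm u.1 w.1, Subtype.ext_iff]
    · intro x y h1 h2 hxy
      apply f.injective
      rcases hx : f x with w | w <;> rcases hy : f y with u | u <;> simp [hx, hy] at hxy
      · rw [hxy]
      · exact (h1 ⟨⟨w, hx, hxy ▸ u.2⟩, u, hy⟩).elim
      · exact (h2 ⟨⟨w, hx⟩, u, hy, hxy ▸ w.2⟩).elim
      · rw [Subtype.ext hxy]
  obtain ⟨ψ, hinj, hψ⟩ := hD.main hac hdeg
  refine ⟨⟨⟨ψ, hinj⟩, ?_⟩⟩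
  intro x y
  by_cases hxy : x = y
  · subst hxy; simp
  · have := hψ x y
    simp only [compl_adj, hinj.ne_iff, ne_eq, hxy, not_false_eq_true, true_and] at this
    exact not_iff_not.mp this
end

section
/- Let Λ be a finite simple graph and let [v,w] be an edge of Λ. Let Λ̄ be the graph obtained from Λ by subdividing the edge [v,w], i.e., Λ̄ has vertex set V(Λ) together with one new vertex u, and its edges are the edges of Λ other than [v,w], together with the two edges [v,u] and [u,w]. Then there is an injective group homomorphism from G(Λ) into G(Λ̄). -/
open SimpleGraph

/-! Strategy: write `G = G(Λ)`.  Map `G(Λ̄)` to `(G × G) ⋊ Aut (G × G)` by sending the new vertex to the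
swap, `v` to `(1, v)`, `w` to `(w, 1)` and every other `x` to `(x, x)`.  The map `φ` conjugates `v`
by the new vertex; the first coordinate of the composite recovers the identity of `G`. -/

theorem raag_comm {V : Type} {G : SimpleGraph V} {a b : V} (h : G.Adj a b) :
    (PresentedGroup.of a : RAAG G) * PresentedGroup.of b =
      PresentedGroup.of b * PresentedGroup.of a := by
  have h1 : (PresentedGroup.mk (raagRels G))
      (FreeGroup.of a * FreeGroup.of b * (FreeGroup.of a)⁻¹ * (FreeGroup.of b)⁻¹) = 1 :=
    PresentedGroup.one_of_mem ⟨a, b, h, rfl⟩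
  simp only [map_mul, map_inv] at h1
  exact (mul_inv_eq_iff_eq_mul.mp (mul_inv_eq_one.mp h1))

theorem raag_lift_ok {V : Type} {G : SimpleGraph V} {H : Type} [Group H] (f : V → H)
    (hf : ∀ a b, G.Adj a b → f a * f b = f b * f a) :
    ∀ r ∈ raagRels G, FreeGroup.lift f r = 1 := by
  rintro r ⟨a, b, hab, rfl⟩
  simp only [map_mul, map_inv, FreeGroup.lift_apply_of]
  rw [hf a b hab]
  group

/-- The wreath-type group receiving `G(Λ̄)`. -/
abbrev Wr (G : Type) [Group G] : Type :=
  SemidirectProduct (G × G) (MulAut (G × G)) (MonoidHom.id _)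

open Classical in
/-- Images of the old generators in the base group. -/
noncomputable def baseGen {V : Type} (Λ : SimpleGraph V) (v w x : V) : GG Λ × GG Λ :=
  if x = v then (1, PresentedGroup.of x)
  else if x = w then (PresentedGroup.of x, 1)
  else (PresentedGroup.of x, PresentedGroup.of x)

/-- Images of all generators of `G(Λ̄)`. -/
noncomputable def wrGen {V : Type} (Λ : SimpleGraph V) (v w : V) : Option V → Wr (GG Λ)
  | none => SemidirectProduct.inr (MulEquiv.prodComm : GG Λ × GG Λ ≃* GG Λ × GG Λ)
  | some x => SemidirectProduct.inl (baseGen Λ v w x)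

open Classical in
/-- Images of generators of `G(Λ)` in `G(Λ̄)`. -/
noncomputable def phiGen {V : Type} (Λ : SimpleGraph V) (v w x : V) : GG (SubdivEdge Λ v w) :=
  if x = v then PresentedGroup.of none * PresentedGroup.of (some x) * (PresentedGroup.of none)⁻¹
  else PresentedGroup.of (some x)

theorem subdiv_some_some {V : Type} (Λ : SimpleGraph V) (v w a b : V) :
    (SubdivEdge Λ v w).Adj (some a) (some b) ↔
      Λ.Adj a b ∧ ¬((a = v ∧ b = w) ∨ (a = w ∧ b = v)) := by
  simp only [SubdivEdge, SimpleGraph.fromRel_adj]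
  have := Λ.adj_comm a b
  have h2 : Λ.Adj a b → a ≠ b := fun h => h.ne
  simp only [ne_eq, Option.some.injEq]
  tauto

theorem subdiv_some_none {V : Type} (Λ : SimpleGraph V) (v w a : V) :
    (SubdivEdge Λ v w).Adj (some a) none ↔ a = v ∨ a = w := by
  simp [SubdivEdge, SimpleGraph.fromRel_adj]

theorem compl_some_some {V : Type} (Λ : SimpleGraph V) (v w a b : V) (h : Λᶜ.Adj a b) :
    (SubdivEdge Λ v w)ᶜ.Adj (some a) (some b) := by
  rw [SimpleGraph.compl_adj] at h ⊢
  rw [subdiv_some_some]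
  exact ⟨fun e => h.1 (Option.some.inj e), fun e => h.2 e.1⟩

theorem compl_none {V : Type} (Λ : SimpleGraph V) (v w a : V) (h : ¬ (a = v ∨ a = w)) :
    (SubdivEdge Λ v w)ᶜ.Adj (some a) none := by
  rw [SimpleGraph.compl_adj, subdiv_some_none]
  exact ⟨by simp, h⟩

theorem phiGen_comm {V : Type} (Λ : SimpleGraph V) (v w : V) (hvw : Λ.Adj v w) (a b : V)
    (hab : Λᶜ.Adj a b) :
    phiGen Λ v w a * phiGen Λ v w b = phiGen Λ v w b * phiGen Λ v w a := by
  have key : ∀ y : V, Λᶜ.Adj v y →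
      Commute (phiGen Λ v w v) (phiGen Λ v w y) := by
    intro y hy
    have hyv : y ≠ v := hy.ne'
    have hyw : y ≠ w := by
      rintro rfl
      exact ((SimpleGraph.compl_adj _ _ _).mp hy).2 hvw
    have h1 : Commute (PresentedGroup.of none : GG (SubdivEdge Λ v w))
        (PresentedGroup.of (some y)) :=
      (raag_comm (compl_none Λ v w y (by tauto))).symm
    have h2 : Commute (PresentedGroup.of (some v) : GG (SubdivEdge Λ v w))
        (PresentedGroup.of (some y)) :=
      raag_comm (compl_some_some Λ v w v y hy)
    simp only [phiGen, if_true, if_neg hyv]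
    exact (h1.mul_left h2).mul_left h1.inv_left
  by_cases ha : a = v
  · subst ha
    exact key b hab
  · by_cases hb : b = v
    · subst hb
      exact (key a hab.symm).symm
    · simp only [phiGen, if_neg ha, if_neg hb]
      exact raag_comm (compl_some_some Λ v w a b hab)

theorem baseGen_comm {V : Type} (Λ : SimpleGraph V) (v w : V) (hvw : Λ.Adj v w) (a b : V)
    (hab : (SubdivEdge Λ v w)ᶜ.Adj (some a) (some b)) :
    baseGen Λ v w a * baseGen Λ v w b = baseGen Λ v w b * baseGen Λ v w a := by
  have hne : v ≠ w := hvw.ne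
  rw [SimpleGraph.compl_adj, subdiv_some_some] at hab
  obtain ⟨h1, h2⟩ := hab
  have h1' : a ≠ b := fun e => h1 (congrArg some e)
  by_cases h3 : Λ.Adj a b
  · have h4 : (a = v ∧ b = w) ∨ (a = w ∧ b = v) := by tauto
    rcases h4 with ⟨rfl, rfl⟩ | ⟨rfl, rfl⟩ <;> simp [baseGen, hne.symm]
  · have hc : (PresentedGroup.of a : GG Λ) * PresentedGroup.of b =
        PresentedGroup.of b * PresentedGroup.of a :=
      raag_comm ((SimpleGraph.compl_adj _ _ _).mpr ⟨h1', h3⟩)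
    simp only [baseGen]
    split_ifs <;> simp [hc]

theorem wrGen_comm {V : Type} (Λ : SimpleGraph V) (v w : V) (hvw : Λ.Adj v w) (a b : Option V)
    (hab : (SubdivEdge Λ v w)ᶜ.Adj a b) :
    wrGen Λ v w a * wrGen Λ v w b = wrGen Λ v w b * wrGen Λ v w a := by
  have key : ∀ x : V, (SubdivEdge Λ v w)ᶜ.Adj (some x) none →
      wrGen Λ v w (some x) * wrGen Λ v w none = wrGen Λ v w none * wrGen Λ v w (some x) := by
    intro x hx
    rw [SimpleGraph.compl_adj, subdiv_some_none] at hx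
    have hx' := hx.2
    push Not at hx'
    ext1 <;> simp [wrGen, baseGen, hx'.1, hx'.2, MulEquiv.prodComm]
  rcases a with _ | a <;> rcases b with _ | b
  · exact (hab.ne rfl).elim
  · exact (key b hab.symm).symm
  · exact key a hab
  · simp only [wrGen, ← map_mul]
    rw [baseGen_comm Λ v w hvw a b hab]

/-- `G(Λ)` embeds into `G(Λ̄)`, where `Λ̄` is obtained from `Λ` by subdividing the
edge `[v,w]`. -/
theorem statement11 {V : Type} [Fintype V] (Λ : SimpleGraph V) (v w : V)
    (hvw : Λ.Adj v w) :
    ∃ φ : GG Λ →* GG (SubdivEdge Λ v w), Function.Injective φ := by 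
  let φ : GG Λ →* GG (SubdivEdge Λ v w) :=
    PresentedGroup.toGroup (raag_lift_ok (phiGen Λ v w) (phiGen_comm Λ v w hvw))
  let ψ : GG (SubdivEdge Λ v w) →* Wr (GG Λ) :=
    PresentedGroup.toGroup (raag_lift_ok (wrGen Λ v w) (wrGen_comm Λ v w hvw))
  have hφ : ∀ x, φ (PresentedGroup.of x) = phiGen Λ v w x := fun x =>
    PresentedGroup.toGroup.of _
  have hψ : ∀ x, ψ (PresentedGroup.of x) = wrGen Λ v w x := fun x =>
    PresentedGroup.toGroup.of _
  have gen : ∀ x : V, ∃ q : GG Λ,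
      ψ (φ (PresentedGroup.of x)) = SemidirectProduct.inl (PresentedGroup.of x, q) := by
    intro x
    rw [hφ]
    by_cases hx : x = v
    · subst hx
      refine ⟨1, ?_⟩
      simp only [phiGen, if_true, map_mul, map_inv, hψ, wrGen]
      rw [← map_inv, ← SemidirectProduct.inl_aut]
      simp [baseGen, MulEquiv.prodComm]
    · simp only [phiGen, if_neg hx, hψ, wrGen, baseGen]
      split_ifs
      · exact ⟨1, rfl⟩
      · exact ⟨_, rfl⟩
  have all : ∀ g : GG Λ, ∃ q : GG Λ, ψ (φ g) = SemidirectProduct.inl (g, q) := by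
    intro g
    have hg : g ∈ Subgroup.closure (Set.range (PresentedGroup.of : V → GG Λ)) := by
      rw [PresentedGroup.closure_range_of]; trivial
    induction hg using Subgroup.closure_induction with
    | mem x hx => obtain ⟨y, rfl⟩ := hx; exact gen y
    | one => exact ⟨1, by rw [map_one, map_one, ← Prod.one_eq_mk, map_one]⟩
    | mul x y _ _ ihx ihy =>
      obtain ⟨p, hp⟩ := ihx
      obtain ⟨q, hq⟩ := ihy
      exact ⟨p * q, by rw [map_mul, map_mul, hp, hq, ← map_mul, Prod.mk_mul_mk]⟩
    | inv x _ ih =>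
      obtain ⟨p, hp⟩ := ih
      exact ⟨p⁻¹, by rw [map_inv, map_inv, hp, ← map_inv, Prod.inv_mk]⟩
  refine ⟨φ, fun g h hgh => ?_⟩
  obtain ⟨p, hp⟩ := all g
  obtain ⟨q, hq⟩ := all h
  rw [hgh, hq] at hp
  exact (congrArg Prod.fst (SemidirectProduct.inl_injective hp)).symm
end

section
/- Let Λ be a finite simple graph with an edge [v,w], and let Λ̄ be the graph obtained from Λ by subdividing the edge [v,w] with a new vertex u (vertex set V(Λ) ∪ {u}; edges those of Λ other than [v,w], together with [v,u] and [u,w]). Then Λᶜ embeds as a full (induced) subgraph into the double D_u((Λ̄)ᶜ) of (Λ̄)ᶜ along the star of u in (Λ̄)ᶜ. -/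
open SimpleGraph

/-- `Λᶜ` embeds as an induced subgraph into the double of `(Λ̄)ᶜ` along the star of
the subdivision vertex `u`, where `Λ̄` is `Λ` with the edge `[v,w]` subdivided. -/
theorem statement12 {V : Type} [Fintype V] (Λ : SimpleGraph V) (v w : V)
    (hvw : Λ.Adj v w) :
    Nonempty (Λᶜ ↪g GraphDouble (SubdivEdge Λ v w)ᶜ (none : Option V)) := by 
  classical
  have hw : (some w : Option V) ∉ starSet (SubdivEdge Λ v w)ᶜ none := by
    simp [starSet, SubdivEdge]
  have hne : v ≠ w := hvw.ne
  have hst : ∀ a : V, some a ∈ starSet (SubdivEdge Λ v w)ᶜ none ↔ a ≠ v ∧ a ≠ w := by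
    intro a
    simp [starSet, SubdivEdge]
  have hadj : ∀ a b : V, (SubdivEdge Λ v w)ᶜ.Adj (some a) (some b) ↔
      a ≠ b ∧ (Λ.Adj a b → (a = v ∧ b = w) ∨ (a = w ∧ b = v)) := by
    intro a b
    have := Λ.adj_comm a b
    simp only [SubdivEdge, SimpleGraph.compl_adj, SimpleGraph.fromRel_adj, ne_eq,
      Option.some.injEq]
    tauto
  refine ⟨⟨⟨fun a => if a = w then Sum.inr ⟨some w, hw⟩ else Sum.inl (some a), ?_⟩, ?_⟩⟩
  · intro a b h
    by_cases ha : a = w <;> by_cases hb : b = w <;> simp_all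
  · intro a b
    have h1 := Λ.adj_comm a b
    have h2 := Λ.adj_comm v w
    change (GraphDouble (SubdivEdge Λ v w)ᶜ none).Adj
      (if a = w then Sum.inr ⟨some w, hw⟩ else Sum.inl (some a))
      (if b = w then Sum.inr ⟨some w, hw⟩ else Sum.inl (some b)) ↔ _
    have hc := SimpleGraph.compl_adj Λ a b
    by_cases ha : a = w <;> by_cases hb : b = w
    · subst ha; subst hb; simp
    · rw [if_pos ha, if_neg hb, hc]
      simp only [GraphDouble, SimpleGraph.fromRel_adj, hst, hadj]
      grind
    · rw [if_neg ha, if_pos hb, hc]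
      simp only [GraphDouble, SimpleGraph.fromRel_adj, hst, hadj]
      grind
    · rw [if_neg ha, if_neg hb, hc]
      simp only [GraphDouble, SimpleGraph.fromRel_adj, hadj]
      grind
end

section
/- Suppose Λ is a finite simple graph that is not a linear forest and every vertex of Λ has degree at most 2. Then there exists a finite simple graph Γ such that there is an injective group homomorphism from G(Λ) into G(Γ), but Λ does not embed into Γ as a full (induced) subgraph. -/
open SimpleGraph

/-- Full subdivision of a graph. -/
def fullSub {V : Type} (Λ : SimpleGraph V) : SimpleGraph (V ⊕ Λ.edgeSet) :=
  SimpleGraph.fromRel (fun x y =>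
    match x, y with
    | Sum.inl a, Sum.inr e => a ∈ e.1
    | _, _ => False)

theorem fullSub_ll {V : Type} (Λ : SimpleGraph V) (a b : V) :
    ¬ (fullSub Λ).Adj (Sum.inl a) (Sum.inl b) := by simp [fullSub]

theorem fullSub_rr {V : Type} (Λ : SimpleGraph V) (a b : Λ.edgeSet) :
    ¬ (fullSub Λ).Adj (Sum.inr a) (Sum.inr b) := by simp [fullSub]

theorem fullSub_lr {V : Type} (Λ : SimpleGraph V) (a : V) (b : Λ.edgeSet) :
    (fullSub Λ).Adj (Sum.inl a) (Sum.inr b) ↔ a ∈ b.1 := by simp [fullSub]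

theorem fullSub_rl {V : Type} (Λ : SimpleGraph V) (a : V) (b : Λ.edgeSet) :
    (fullSub Λ).Adj (Sum.inr b) (Sum.inl a) ↔ a ∈ b.1 := by simp [fullSub]

/-- Every vertex of `S` has at least two neighbours in `S`. -/
def IsCore {V : Type} (G : SimpleGraph V) (S : Finset V) : Prop :=
  S.Nonempty ∧ ∀ v ∈ S, ∃ a ∈ S, ∃ b ∈ S, a ≠ b ∧ G.Adj v a ∧ G.Adj v b

theorem exists_core {V : Type} [Fintype V] (G : SimpleGraph V) (h : ¬ G.IsAcyclic) :
    ∃ S, IsCore G S := by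
  classical
  simp only [IsAcyclic, not_forall, not_not] at h
  obtain ⟨u, p, hp⟩ := h
  refine ⟨p.support.toFinset, ⟨u, by simp⟩, fun v hv => ?_⟩
  have h2 := hp.ncard_neighborSet_toSubgraph_eq_two (by simpa using hv : v ∈ p.support)
  obtain ⟨a, b, hab, h3⟩ := Set.ncard_eq_two.1 h2
  have ha : p.toSubgraph.Adj v a := by
    have : a ∈ p.toSubgraph.neighborSet v := by rw [h3]; simp
    exact this
  have hb : p.toSubgraph.Adj v b := by
    have : b ∈ p.toSubgraph.neighborSet v := by rw [h3]; simp
    exact this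
  refine ⟨a, ?_, b, ?_, hab, ha.adj_sub, hb.adj_sub⟩
  · have := ha.snd_mem
    simpa using this
  · have := hb.snd_mem
    simpa using this

theorem core_descent {V : Type} [Fintype V] (G : SimpleGraph V) (f : G ↪g fullSub G)
    (S : Finset V) (hS : IsCore G S) : ∃ T, IsCore G T ∧ T.card < S.card := by
  classical
  obtain ⟨⟨s0, hs0⟩, hc⟩ := hS
  -- edges in the image have both endpoints in the image
  have key : ∀ s ∈ S, ∀ e, f s = Sum.inr e → ∀ v, v ∈ e.1 →
      ∃ w, (∃ t ∈ S, f t = Sum.inl w) ∧ e.1 = s(v, w) ∧ v ≠ w := by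
    intro s hs e he v hv
    obtain ⟨a, ha, b, hb, hab, h1, h2⟩ := hc s hs
    rw [← f.map_adj_iff, he] at h1 h2
    rcases hfa : f a with a' | a'
    swap
    · rw [hfa] at h1; exact absurd h1 (fullSub_rr _ _ _)
    rcases hfb : f b with b' | b'
    swap
    · rw [hfb] at h2; exact absurd h2 (fullSub_rr _ _ _)
    rw [hfa, fullSub_rl] at h1
    rw [hfb, fullSub_rl] at h2
    have hne : a' ≠ b' := by
      rintro rfl
      exact hab (f.injective (hfa.trans hfb.symm))
    by_cases hva : v = a'
    · subst hva
      exact ⟨b', ⟨b, hb, hfb⟩, (Sym2.mem_and_mem_iff hne).1 ⟨h1, h2⟩, hne⟩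
    · exact ⟨a', ⟨a, ha, hfa⟩, (Sym2.mem_and_mem_iff hva).1 ⟨hv, h1⟩, hva⟩
  have key2 : ∀ s ∈ S, ∀ v, f s = Sum.inl v → ∃ a ∈ S, ∃ b ∈ S, a ≠ b ∧ ∃ e e',
      f a = Sum.inr e ∧ f b = Sum.inr e' ∧ v ∈ e.1 ∧ v ∈ e'.1 := by
    intro s hs v he
    obtain ⟨a, ha, b, hb, hab, h1, h2⟩ := hc s hs
    rw [← f.map_adj_iff, he] at h1 h2
    rcases hfa : f a with a' | a'
    · rw [hfa] at h1; exact absurd h1 (fullSub_ll _ _ _)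
    rcases hfb : f b with b' | b'
    · rw [hfb] at h2; exact absurd h2 (fullSub_ll _ _ _)
    rw [hfa, fullSub_lr] at h1
    rw [hfb, fullSub_lr] at h2
    exact ⟨a, ha, b, hb, hab, a', b', hfa, hfb, h1, h2⟩
  have hl : ∃ s ∈ S, ∃ v, f s = Sum.inl v := by
    rcases h : f s0 with v | e
    · exact ⟨s0, hs0, v, h⟩
    · obtain ⟨v, hv⟩ : ∃ v, v ∈ e.1 := ⟨_, Sym2.out_fst_mem e.1⟩
      obtain ⟨w, ⟨t, ht, htw⟩, -⟩ := key s0 hs0 e h v hv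
      exact ⟨t, ht, w, htw⟩
  obtain ⟨s1, hs1, v1, hv1⟩ := hl
  obtain ⟨a1, ha1, -, -, -, e1, -, hae1, -⟩ := key2 s1 hs1 v1 hv1
  refine ⟨Finset.univ.filter (fun v => ∃ s ∈ S, f s = Sum.inl v), ⟨⟨v1, ?_⟩, ?_⟩, ?_⟩
  · simp only [Finset.mem_filter, Finset.mem_univ, true_and]
    exact ⟨s1, hs1, hv1⟩
  · simp only [Finset.mem_filter, Finset.mem_univ, true_and]
    rintro v ⟨s, hs, hsv⟩
    obtain ⟨a, ha, b, hb, hab, e, e', hae, hbe, hve, hve'⟩ := key2 s hs v hsv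
    obtain ⟨w, hw, hew, hvw⟩ := key a ha e hae v hve
    obtain ⟨w', hw', hew', hvw'⟩ := key b hb e' hbe v hve'
    refine ⟨w, hw, w', hw', ?_, ?_, ?_⟩
    · rintro rfl
      have : e = e' := Subtype.ext (hew.trans hew'.symm)
      subst this
      exact hab (f.injective (hae.trans hbe.symm))
    · have := e.2
      rwa [hew, mem_edgeSet] at this
    · have := e'.2
      rwa [hew', mem_edgeSet] at this
  · have h1 : ((Finset.univ.filter (fun v => ∃ s ∈ S, f s = Sum.inl v)).image
        (Sum.inl : V → V ⊕ G.edgeSet)) ⊂ S.image f := by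
      rw [Finset.ssubset_iff_of_subset]
      · refine ⟨Sum.inr e1, ?_, by simp⟩
        exact Finset.mem_image.2 ⟨a1, ha1, hae1⟩
      · intro x hx
        simp only [Finset.mem_image, Finset.mem_filter, Finset.mem_univ, true_and] at hx ⊢
        obtain ⟨v, ⟨s, hs, h⟩, rfl⟩ := hx
        exact ⟨s, hs, h⟩
    have h2 := Finset.card_lt_card h1
    rwa [Finset.card_image_of_injective _ Sum.inl_injective,
      Finset.card_image_of_injective _ f.injective] at h2

theorem no_embed {V : Type} [Fintype V] (G : SimpleGraph V) (h : ¬ G.IsAcyclic) :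
    ¬ Nonempty (G ↪g fullSub G) := by
  rintro ⟨f⟩
  have : ∀ n, ∀ S, IsCore G S → S.card = n → False := by
    intro n
    induction n using Nat.strong_induction_on with
    | _ n ih =>
      rintro S hS rfl
      obtain ⟨T, hT, hlt⟩ := core_descent G f S hS
      exact ih _ hlt T hT rfl
  obtain ⟨S, hS⟩ := exists_core G h
  exact this _ S hS rfl

/-- Universal property of `G(Γ)`. -/
theorem GG_lift {V : Type} (G : SimpleGraph V) {H : Type} [Group H] (f : V → H)
    (hf : ∀ u v, u ≠ v → ¬ G.Adj u v → Commute (f u) (f v)) :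
    ∃ φ : GG G →* H, ∀ v, φ (PresentedGroup.of v) = f v := by
  have : ∀ r ∈ raagRels Gᶜ, FreeGroup.lift f r = 1 := by
    rintro r ⟨u, v, huv, rfl⟩
    have := hf u v huv.1 huv.2
    simp only [map_mul, map_inv, FreeGroup.lift_apply_of]
    rw [this.eq]; group
  exact ⟨PresentedGroup.toGroup this, fun v => PresentedGroup.toGroup.of this⟩

theorem GG_commute {V : Type} (G : SimpleGraph V) (u v : V) (h : ¬ G.Adj u v) :
    Commute (PresentedGroup.of u : GG G) (PresentedGroup.of v) := by
  by_cases huv : u = v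
  · subst huv; exact Commute.refl _
  have : (PresentedGroup.mk (raagRels Gᶜ)) (FreeGroup.of u * FreeGroup.of v * (FreeGroup.of u)⁻¹ *
      (FreeGroup.of v)⁻¹) = 1 :=
    PresentedGroup.one_of_mem ⟨u, v, ⟨huv, h⟩, rfl⟩
  simp only [map_mul, map_inv] at this
  rw [mul_inv_eq_one, mul_inv_eq_iff_eq_mul] at this
  exact this

/-- A translation. -/
def tauPerm {E H : Type} (d : E → ℤ) : Equiv.Perm ((E → ℤ) × H) where
  toFun p := (p.1 + d, p.2)
  invFun p := (p.1 - d, p.2)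
  left_inv p := by simp
  right_inv p := by simp

/-- A fibrewise multiplication. -/
def fibPerm {E H : Type} [Group H] (F : (E → ℤ) → H) : Equiv.Perm ((E → ℤ) × H) where
  toFun p := (p.1, F p.1 * p.2)
  invFun p := (p.1, (F p.1)⁻¹ * p.2)
  left_inv p := by simp
  right_inv p := by simp

theorem tau_list {E H : Type} (l : List (E → ℤ)) :
    ((l.map (fun d => (tauPerm d : Equiv.Perm ((E → ℤ) × H)))).prod) = tauPerm l.sum := by
  induction l with
  | nil => ext p <;> simp [tauPerm]
  | cons a l ih =>
    simp only [List.map_cons, List.prod_cons, ih, List.sum_cons]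
    ext p <;> simp [tauPerm, add_comm, add_left_comm]

open Classical in
theorem exists_inj {V : Type} [Fintype V] (Λ : SimpleGraph V) :
    ∃ φ : GG Λ →* GG (fullSub Λ), Function.Injective φ := by
  let tail : Λ.edgeSet → V := fun e => (Quot.out e.1).1
  have tail_mem : ∀ e, tail e ∈ e.1 := fun e => Sym2.out_fst_mem e.1
  let out : V → Finset Λ.edgeSet := fun v => Finset.univ.filter (fun e => tail e = v)
  let gv : V → GG (fullSub Λ) := fun v => PresentedGroup.of (Sum.inl v)
  let ge : Λ.edgeSet → GG (fullSub Λ) := fun e => PresentedGroup.of (Sum.inr e)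
  let B : V → GG (fullSub Λ) := fun v => ((out v).toList.map ge).prod
  have hBB : ∀ v w, Commute (B v) (B w) := by
    intro v w
    refine Commute.list_prod_left _ _ fun x hx => Commute.list_prod_right _ _ fun y hy => ?_
    obtain ⟨e, -, rfl⟩ := List.mem_map.1 hx
    obtain ⟨e', -, rfl⟩ := List.mem_map.1 hy
    exact GG_commute _ _ _ (fullSub_rr _ _ _)
  have hgB : ∀ v w, v ≠ w → ¬ Λ.Adj v w → Commute (gv v) (B w) := by
    intro v w hne hvw
    refine Commute.list_prod_right _ _ fun y hy => ?_
    obtain ⟨e, he, rfl⟩ := List.mem_map.1 hy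
    refine GG_commute _ _ _ ?_
    rw [fullSub_lr]
    intro hv
    have he' : tail e = w := by simpa [out] using he
    have hw : w ∈ e.1 := he' ▸ tail_mem e
    have h3 := (Sym2.mem_and_mem_iff hne).1 ⟨hv, hw⟩
    have h4 := e.2
    rw [h3, mem_edgeSet] at h4
    exact hvw h4
  obtain ⟨φ, hφ⟩ := GG_lift Λ (fun v => (B v)⁻¹ * gv v * B v) (by
    intro u v hne huv
    have huv' : ¬ Λ.Adj v u := fun h => huv h.symm
    have c1 : Commute (gv u) (gv v) := GG_commute _ _ _ (fullSub_ll _ _ _)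
    have c2 := hgB u v hne huv
    have c3 := (hgB v u hne.symm huv').symm
    have c4 := hBB u v
    have d1 : Commute (gv u) ((B v)⁻¹ * gv v * B v) := (c2.inv_right.mul_right c1).mul_right c2
    have d2 : Commute (B u) ((B v)⁻¹ * gv v * B v) := (c4.inv_right.mul_right c3).mul_right c4
    exact (d2.inv_left.mul_left d1).mul_left d2)
  refine ⟨φ, ?_⟩
  let ok : V → (Λ.edgeSet → ℤ) → Prop := fun v x =>
    ∀ e : Λ.edgeSet, v ∈ e.1 → x e = if tail e = v then 1 else 0
  let F : V → (Λ.edgeSet → ℤ) → GG Λ := fun v x => if ok v x then PresentedGroup.of v else 1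
  let P : V ⊕ Λ.edgeSet → Equiv.Perm ((Λ.edgeSet → ℤ) × GG Λ) := fun s =>
    match s with
    | Sum.inl v => fibPerm (F v)
    | Sum.inr e => tauPerm (Pi.single e 1)
  have hve : ∀ v (e : Λ.edgeSet), v ∉ e.1 → Commute (P (Sum.inl v)) (P (Sum.inr e)) := by
    intro v e hv
    have hF : ∀ x, F v (x + Pi.single e 1) = F v x := by
      intro x
      have : ok v (x + Pi.single e 1) ↔ ok v x := by
        refine forall_congr' fun e' => forall_congr' fun he' => ?_
        have : e' ≠ e := by rintro rfl; exact hv he'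
        simp [Pi.single_apply, this]
      simp only [F, this]
    refine Equiv.ext fun p => ?_
    refine Prod.ext rfl ?_
    simp only [P, fibPerm, tauPerm, Equiv.Perm.mul_apply, Equiv.coe_fn_mk, hF]
  obtain ⟨ψ, hψ⟩ := GG_lift (fullSub Λ) P (by
    rintro (u | e) (v | e') hne hadj
    · refine Equiv.ext fun p => ?_
      refine Prod.ext rfl ?_
      simp only [P, fibPerm, Equiv.Perm.mul_apply, Equiv.coe_fn_mk, ← mul_assoc]
      congr 1
      change Commute (F u p.1) (F v p.1)
      have hne' : u ≠ v := fun h => hne (congrArg _ h)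
      by_cases hu : ok u p.1
      swap
      · simp only [F, if_neg hu]; exact Commute.one_left _
      by_cases hv : ok v p.1
      swap
      · simp only [F, if_neg hv]; exact Commute.one_right _
      simp only [F, if_pos hu, if_pos hv]
      refine GG_commute _ _ _ fun h => ?_
      have h1 := hu ⟨s(u, v), h⟩ (by simp)
      have h2 := hv ⟨s(u, v), h⟩ (by simp)
      have h3 := tail_mem ⟨s(u, v), h⟩
      rw [h1] at h2
      rcases Sym2.mem_iff.1 h3 with h4 | h4
      · simp [h4, hne'] at h2
      · simp [h4, hne'.symm] at h2
    · exact hve _ _ (by rwa [fullSub_lr] at hadj)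
    · exact (hve _ _ (by rwa [fullSub_rl] at hadj)).symm
    · refine Equiv.ext fun p => ?_
      refine Prod.ext ?_ rfl
      simp only [P, tauPerm, Equiv.Perm.mul_apply, Equiv.coe_fn_mk]
      abel)
  have hB : ∀ v, ψ (B v) = tauPerm (fun e => if tail e = v then 1 else 0) := by
    intro v
    have h1 : ψ (B v) = (((out v).toList.map (fun e => (Pi.single e 1 : Λ.edgeSet → ℤ))).map
        (fun d => (tauPerm d : Equiv.Perm ((Λ.edgeSet → ℤ) × GG Λ)))).prod := by
      simp only [B, map_list_prod, List.map_map]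
      congr 1
      refine List.map_congr_left fun e _ => ?_
      exact hψ (Sum.inr e)
    rw [h1, tau_list, Finset.sum_map_toList]
    congr 1
    ext e
    simp [out, Finset.sum_apply, Pi.single_apply]
  have main : ∀ g : GG Λ, ∀ h, ψ (φ g) (0, h) = (0, g * h) := by
    let K : Subgroup (GG Λ) :=
      { carrier := {g | ∀ h, ψ (φ g) (0, h) = (0, g * h)}
        one_mem' := by intro h; simp
        mul_mem' := by
          intro a b ha hb h
          rw [map_mul, map_mul, Equiv.Perm.mul_apply, hb, ha, mul_assoc]
        inv_mem' := by
          intro a ha h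
          rw [map_inv, map_inv, Equiv.Perm.inv_eq_iff_eq, ha]
          simp }
    have hK : K = ⊤ := by
      rw [eq_top_iff, ← PresentedGroup.closure_range_of, Subgroup.closure_le]
      rintro _ ⟨v, rfl⟩ h
      rw [hφ, map_mul, map_mul, map_inv, hB, Equiv.Perm.mul_apply, Equiv.Perm.mul_apply,
        Equiv.Perm.inv_eq_iff_eq]
      have hg : ψ (gv v) = fibPerm (F v) := hψ (Sum.inl v)
      rw [hg]
      have hok : ok v (0 + fun e => if tail e = v then 1 else 0) := by
        intro e _; simp
      simp only [tauPerm, fibPerm, Equiv.coe_fn_mk, F, if_pos hok]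
    intro g
    have : g ∈ K := hK ▸ Subgroup.mem_top g
    exact this
  rw [injective_iff_map_eq_one]
  intro g hg
  have := main g 1
  rw [hg, map_one] at this
  simpa using (congrArg Prod.snd this).symm

/-- If `Λ` is not a linear forest and has maximum degree at most 2, then there is a
finite graph `Γ` with `G(Λ) ↪ G(Γ)` but `Λ` not an induced subgraph of `Γ`. -/
theorem statement13 {V : Type} [Fintype V] (Λ : SimpleGraph V)
    (hΛ : ¬ IsLinearForest Λ) (hdeg : ∀ v : V, (Λ.neighborSet v).ncard ≤ 2) :
    ∃ (W : Type) (_ : Fintype W) (Γ : SimpleGraph W),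
      (∃ φ : GG Λ →* GG Γ, Function.Injective φ) ∧ ¬ Nonempty (Λ ↪g Γ) := by
  classical
  have hac : ¬ Λ.IsAcyclic := fun h => hΛ ⟨h, hdeg⟩
  exact ⟨V ⊕ Λ.edgeSet, inferInstance, fullSub Λ, exists_inj Λ, no_embed Λ hac⟩
end

section
/- Let Λ be a finite simple graph, u a vertex of Λ of degree at least 2, and w₁, w₂ two distinct vertices adjacent to u. Then there is an injective group homomorphism from G(Λ) into G(Λ_u⁺(w₁,w₂)). -/
open SimpleGraph

/-- Universal property of a right-angled Artin group. -/
def raagLift {V : Type} {H : Type} [Group H] (G : SimpleGraph V) (f : V → H)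
    (hf : ∀ a b, G.Adj a b → Commute (f a) (f b)) : RAAG G →* H :=
  PresentedGroup.toGroup (f := f) (by
    rintro r ⟨a, b, hab, rfl⟩
    have h := (hf a b hab).eq
    simp only [map_mul, map_inv, FreeGroup.lift_apply_of]
    rw [h]; group)

theorem raagLift_of {V : Type} {H : Type} [Group H] (G : SimpleGraph V) (f : V → H)
    (hf : ∀ a b, G.Adj a b → Commute (f a) (f b)) (a : V) :
    raagLift G f hf (PresentedGroup.of a) = f a :=
  PresentedGroup.toGroup.of _

theorem raag_commute {V : Type} (G : SimpleGraph V) {a b : V} (h : G.Adj a b) :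
    Commute (PresentedGroup.of a : RAAG G) (PresentedGroup.of b) := by
  have h1 : (PresentedGroup.mk (raagRels G)) (FreeGroup.of a * FreeGroup.of b *
      (FreeGroup.of a)⁻¹ * (FreeGroup.of b)⁻¹) = 1 :=
    PresentedGroup.one_of_mem ⟨a, b, h, rfl⟩
  simp only [map_mul, map_inv] at h1
  rw [mul_inv_eq_one, mul_inv_eq_iff_eq_mul] at h1
  exact h1

theorem plus_compl_some {V : Type} (Λ : SimpleGraph V) (u w₁ w₂ : V) (hne : w₁ ≠ w₂)
    (h2 : Λ.Adj u w₂) (a b : V) :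
    (PlusGraph Λ u w₁ w₂)ᶜ.Adj (some a) (some b) ↔
      a ≠ b ∧ (Λ.Adj a b → (a = u ∧ b = w₁) ∨ (a = w₁ ∧ b = u)) := by
  have := h2.ne
  have := h2.symm
  have := Λ.adj_comm a b
  simp only [PlusGraph, MinusGraph, SimpleGraph.compl_adj, SimpleGraph.fromRel_adj,
    Option.some.injEq, ne_eq]
  grind

theorem plus_compl_none {V : Type} (Λ : SimpleGraph V) (u w₁ w₂ : V) (a : V) :
    (PlusGraph Λ u w₁ w₂)ᶜ.Adj (some a) none ↔ ¬ (a = w₁ ∨ a = u ∨ a = w₂) := by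
  simp [PlusGraph, MinusGraph, SimpleGraph.compl_adj, SimpleGraph.fromRel_adj]

/-- The doubled graph used to detect injectivity. -/
def dblGraph {V : Type} (C : SimpleGraph V) (N : V → Prop) : SimpleGraph (V × Bool) where
  Adj x y := C.Adj x.1 y.1 ∧ (N x.1 → N y.1 → x.2 = y.2)
  symm := ⟨fun _ _ h => ⟨h.1.symm, fun hx hy => (h.2 hy hx).symm⟩⟩
  loopless := ⟨fun _ h => C.loopless.irrefl _ h.1⟩

open Classical in
/-- The swap of the two copies of `N`. -/
noncomputable def dblSwap {V : Type} (N : V → Prop) (x : V × Bool) : V × Bool :=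
  if N x.1 then (x.1, !x.2) else x

theorem dblSwap_swap {V : Type} (N : V → Prop) (x : V × Bool) :
    dblSwap N (dblSwap N x) = x := by
  unfold dblSwap; split_ifs <;> simp_all

theorem dblSwap_adj {V : Type} (C : SimpleGraph V) (N : V → Prop) (x y : V × Bool)
    (h : (dblGraph C N).Adj x y) : (dblGraph C N).Adj (dblSwap N x) (dblSwap N y) := by
  obtain ⟨h1, h2⟩ := h
  unfold dblSwap
  constructor <;> split_ifs <;> simp_all

/-- The homomorphism induced by the swap. -/
noncomputable def dblHom {V : Type} (C : SimpleGraph V) (N : V → Prop) :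
    RAAG (dblGraph C N) →* RAAG (dblGraph C N) :=
  raagLift _ (fun x => PresentedGroup.of (dblSwap N x))
    (fun _ _ h => raag_commute _ (dblSwap_adj C N _ _ h))

theorem dblHom_of {V : Type} (C : SimpleGraph V) (N : V → Prop) (x : V × Bool) :
    dblHom C N (PresentedGroup.of x) = PresentedGroup.of (dblSwap N x) :=
  raagLift_of _ _ _ _

theorem dblHom_comp {V : Type} (C : SimpleGraph V) (N : V → Prop) :
    (dblHom C N).comp (dblHom C N) = MonoidHom.id _ := by
  apply PresentedGroup.ext
  intro x
  simp [dblHom_of, dblSwap_swap]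

/-- The automorphism induced by the swap. -/
noncomputable def dblAut {V : Type} (C : SimpleGraph V) (N : V → Prop) :
    MulAut (RAAG (dblGraph C N)) :=
  MonoidHom.toMulEquiv (dblHom C N) (dblHom C N) (dblHom_comp C N) (dblHom_comp C N)

theorem dblAut_of {V : Type} (C : SimpleGraph V) (N : V → Prop) (x : V × Bool) :
    dblAut C N (PresentedGroup.of x) = PresentedGroup.of (dblSwap N x) :=
  dblHom_of C N x

/-- `G(Λ)` embeds into `G(Λ_u⁺(w₁,w₂))`. -/
theorem statement15 {V : Type} [Fintype V] (Λ : SimpleGraph V) (u w₁ w₂ : V)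
    (hdeg : 2 ≤ (Λ.neighborSet u).ncard) (hne : w₁ ≠ w₂)
    (h1 : Λ.Adj u w₁) (h2 : Λ.Adj u w₂) :
    ∃ φ : GG Λ →* GG (PlusGraph Λ u w₁ w₂), Function.Injective φ := by
  classical
  have hs := plus_compl_some Λ u w₁ w₂ hne h2
  have hn := plus_compl_none Λ u w₁ w₂
  set P := PlusGraph Λ u w₁ w₂ with hP
  let N : V → Prop := fun a => a = w₁ ∨ a = u ∨ a = w₂
  have hN : ∀ a, N a ↔ (a = w₁ ∨ a = u ∨ a = w₂) := fun a => Iff.rfl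
  let C : SimpleGraph V := Pᶜ.comap some
  have hC : ∀ a b, C.Adj a b ↔
      a ≠ b ∧ (Λ.Adj a b → (a = u ∧ b = w₁) ∨ (a = w₁ ∧ b = u)) := hs
  let D := dblGraph C N
  have hD : ∀ x y, D.Adj x y ↔ C.Adj x.1 y.1 ∧ (N x.1 → N y.1 → x.2 = y.2) :=
    fun x y => Iff.rfl
  have h1' := h1.symm
  have h2' := h2.symm
  have hu1 := h1.ne
  have hu2 := h2.ne
  -- the embedding
  let v : GG P := PresentedGroup.of none
  let φ : GG Λ →* GG P := raagLift Λᶜ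
    (fun a => if a = u then v * PresentedGroup.of (some a) * v⁻¹
      else PresentedGroup.of (some a)) (by
    have key : ∀ b, Λᶜ.Adj u b → Commute (v * PresentedGroup.of (some u) * v⁻¹)
        (PresentedGroup.of (some b) : GG P) := by
      intro b hb
      rw [SimpleGraph.compl_adj] at hb
      have hv : Commute (PresentedGroup.of (some b) : GG P) v :=
        raag_commute _ ((hn b).2 (by grind))
      have hub : Commute (PresentedGroup.of (some u) : GG P) (PresentedGroup.of (some b)) :=
        raag_commute _ ((hs u b).2 ⟨hb.1, fun h => absurd h hb.2⟩)
      exact (hv.symm.mul_left hub).mul_left hv.symm.inv_left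
    intro a b hab
    by_cases ha : a = u
    · subst ha
      have : b ≠ a := hab.ne'
      simpa [this] using key b hab
    · by_cases hb : b = u
      · subst hb
        simpa [ha] using (key a hab.symm).symm
      · simp only [ha, hb, if_false]
        rw [SimpleGraph.compl_adj] at hab
        exact raag_commute _ ((hs a b).2 ⟨hab.1, fun h => absurd h hab.2⟩))
  -- the map to the double
  let κ : GG Λ →* RAAG D := raagLift Λᶜ (fun a => PresentedGroup.of (a, decide (a = u))) (by
    intro a b hab
    rw [SimpleGraph.compl_adj] at hab
    apply raag_commute
    rw [hD]
    refine ⟨(hC a b).2 ⟨hab.1, fun h => absurd h hab.2⟩, ?_⟩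
    simp only [hN]
    grind)
  -- the retraction
  let R : RAAG D →* GG Λ := raagLift D
    (fun x => if N x.1 ∧ (x.2 = true ↔ x.1 ≠ u) then 1 else PresentedGroup.of x.1) (by
    rintro ⟨a, i⟩ ⟨b, j⟩ hab
    rw [hD, hC] at hab
    simp only [hN] at hab ⊢
    split_ifs with ha hb hb
    · exact Commute.one_left _
    · exact Commute.one_left _
    · exact Commute.one_right _
    · apply raag_commute
      rw [SimpleGraph.compl_adj]
      refine ⟨hab.1.1, fun h => ?_⟩
      grind)
  have hR : R.comp κ = MonoidHom.id _ := by
    apply PresentedGroup.ext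
    intro a
    simp only [MonoidHom.comp_apply, κ, R, raagLift_of, MonoidHom.id_apply]
    rw [if_neg]
    simp only [decide_eq_true_eq]
    tauto
  -- the map to the semidirect product
  let A : MulAut (RAAG D) := dblAut C N
  let S := RAAG D ⋊[MonoidHom.id (MulAut (RAAG D))] MulAut (RAAG D)
  have hA : ∀ k : RAAG D, (SemidirectProduct.inr A * SemidirectProduct.inl k *
      (SemidirectProduct.inr A)⁻¹ : S) = SemidirectProduct.inl (A k) := by
    intro k
    have := SemidirectProduct.inl_aut (φ := MonoidHom.id (MulAut (RAAG D))) A k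
    rw [← map_inv]
    exact this.symm
  have hAv : ∀ a, Pᶜ.Adj (some a) none →
      Commute (SemidirectProduct.inl (PresentedGroup.of (a, false)) : S)
        (SemidirectProduct.inr A) := by
    intro a ha
    have h := hA (PresentedGroup.of (a, false))
    rw [show A (PresentedGroup.of (a, false)) = PresentedGroup.of (dblSwap N (a, false)) from
      dblAut_of C N _, dblSwap, if_neg ((hn a).1 ha), mul_inv_eq_iff_eq_mul] at h
    exact h.symm
  let ψ : GG P →* S := raagLift Pᶜ (fun x => match x with
    | some a => SemidirectProduct.inl (PresentedGroup.of (a, false))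
    | none => SemidirectProduct.inr A) (by
    rintro (_ | a) (_ | b) hab
    · exact Commute.refl _
    · exact (hAv b hab.symm).symm
    · exact hAv a hab
    · apply Commute.map
      apply raag_commute
      rw [hD]
      exact ⟨hab, fun _ _ => rfl⟩)
  have hψ : ψ.comp φ = SemidirectProduct.inl.comp κ := by
    apply PresentedGroup.ext
    intro a
    simp only [MonoidHom.comp_apply, φ, κ, raagLift_of]
    by_cases ha : a = u
    · rw [if_pos ha, map_mul, map_mul, map_inv]
      simp only [ψ, v, raagLift_of]
      rw [hA, show A (PresentedGroup.of (a, false)) = PresentedGroup.of (dblSwap N (a, false)) from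
        dblAut_of C N _, dblSwap, if_pos (Or.inr (Or.inl ha))]
      simp [ha]
    · rw [if_neg ha]
      simp only [ψ, raagLift_of]
      simp [ha]
  refine ⟨φ, ?_⟩
  intro x y hxy
  have e : (SemidirectProduct.inl (κ x) : S) = SemidirectProduct.inl (κ y) := by
    have ex := DFunLike.congr_fun hψ x
    have ey := DFunLike.congr_fun hψ y
    simp only [MonoidHom.comp_apply] at ex ey
    rw [← ex, ← ey, hxy]
  have e2 := SemidirectProduct.inl_injective e
  have rx := DFunLike.congr_fun hR x
  have ry := DFunLike.congr_fun hR y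
  simp only [MonoidHom.comp_apply, MonoidHom.id_apply] at rx ry
  rw [← rx, ← ry, e2]
end

section
/- Suppose Λ is a finite simple graph having a vertex of degree at least 4. Then there exists a finite simple graph Γ such that there is an injective group homomorphism from G(Λ) into G(Γ), but Λ does not embed into Γ as a full (induced) subgraph. -/
open SimpleGraph

namespace SplitVertex

/-! ### Generalities on RAAGs -/

/-- The generator of `G(Γ)` attached to a vertex. -/
def gen {V : Type} (Γ : SimpleGraph V) (x : V) : GG Γ := PresentedGroup.of x

lemma gen_commute {V : Type} (Γ : SimpleGraph V) {x y : V} (h : ¬ Γ.Adj x y) :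
    Commute (gen Γ x) (gen Γ y) := by
  by_cases hxy : x = y
  · subst hxy; exact Commute.refl _
  · have h1 : FreeGroup.of x * FreeGroup.of y * (FreeGroup.of x)⁻¹ * (FreeGroup.of y)⁻¹
        ∈ raagRels Γᶜ := ⟨x, y, by simp [hxy, h], rfl⟩
    have h2 := PresentedGroup.one_of_mem h1
    rw [map_mul, map_mul, map_mul, map_inv, map_inv, mul_inv_eq_one, mul_inv_eq_iff_eq_mul] at h2
    exact h2

/-- The universal property of `G(Γ)`. -/
def gLift {V : Type} (Γ : SimpleGraph V) {K : Type*} [Group K] (f : V → K)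
    (hf : ∀ x y, ¬ Γ.Adj x y → Commute (f x) (f y)) : GG Γ →* K :=
  PresentedGroup.toGroup (f := f) (by
    rintro r ⟨x, y, hxy, rfl⟩
    have := hf x y (by simpa using fun h => (by simp [h] at hxy : False))
    simp only [map_mul, map_inv, FreeGroup.lift_apply_of]
    rw [this.eq]; group)

@[simp] lemma gLift_gen {V : Type} (Γ : SimpleGraph V) {K : Type*} [Group K] (f : V → K)
    (hf : ∀ x y, ¬ Γ.Adj x y → Commute (f x) (f y)) (x : V) :
    gLift Γ f hf (gen Γ x) = f x := PresentedGroup.toGroup.of _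

lemma g_ext {V : Type} {Γ : SimpleGraph V} {K : Type*} [Group K] {f g : GG Γ →* K}
    (h : ∀ x, f (gen Γ x) = g (gen Γ x)) : f = g := PresentedGroup.ext h

/-- The standard parabolic subgroup generated by a set of vertices. -/
def par {V : Type} (Γ : SimpleGraph V) (S : Set V) : Subgroup (GG Γ) :=
  Subgroup.closure (gen Γ '' S)

open Classical in
/-- The retraction onto a standard parabolic subgroup. -/
noncomputable def retr {V : Type} (Γ : SimpleGraph V) (S : Set V) : GG Γ →* GG Γ :=
  gLift Γ (fun x => if x ∈ S then gen Γ x else 1) (by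
    intro x y h
    split_ifs
    · exact gen_commute Γ h
    · exact Commute.one_right _
    · exact Commute.one_left _
    · exact Commute.one_left _)

lemma par_inter {V : Type} (Γ : SimpleGraph V) (S T : Set V) {b : GG Γ}
    (hS : b ∈ par Γ S) (hT : b ∈ par Γ T) : b ∈ par Γ (S ∩ T) := by
  have h1 : par Γ S ≤ (retr Γ S).eqLocus (MonoidHom.id _) := by
    refine (Subgroup.closure_le _).2 ?_
    rintro _ ⟨x, hx, rfl⟩
    simp [MonoidHom.eqLocus, retr, hx]
  have h2 : par Γ T ≤ (par Γ (S ∩ T)).comap (retr Γ S) := by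
    refine (Subgroup.closure_le _).2 ?_
    rintro _ ⟨x, hx, rfl⟩
    simp only [retr, Subgroup.coe_comap, Set.mem_preimage, gLift_gen, SetLike.mem_coe]
    split_ifs with h
    · exact Subgroup.subset_closure ⟨x, ⟨h, hx⟩, rfl⟩
    · exact one_mem _
  have h3 : retr Γ S b = b := h1 hS
  have h4 : retr Γ S b ∈ par Γ (S ∩ T) := h2 hT
  rwa [h3] at h4

lemma par_commute {V : Type} (Γ : SimpleGraph V) (S : Set V) {K : Type*} [Group K]
    (f : GG Γ →* K) (k : K) (h : ∀ x ∈ S, Commute k (f (gen Γ x))) {b : GG Γ}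
    (hb : b ∈ par Γ S) : Commute k (f b) := by
  have : par Γ S ≤ (Subgroup.centralizer {k}).comap f := by
    refine (Subgroup.closure_le _).2 ?_
    rintro _ ⟨x, hx, rfl⟩
    simpa [Subgroup.mem_centralizer_iff] using (h x hx).eq
  have h2 := this hb
  simp [Subgroup.mem_centralizer_iff] at h2
  exact h2

/-! ### HNN extensions with trivial twisting -/

/-- The HNN extension of `G` whose stable letter centralizes `C`. -/
abbrev HE (G : Type*) [Group G] (C : Subgroup G) := HNNExtension G C C (MulEquiv.refl C)

/-- The stable letter. -/
abbrev st {G : Type*} [Group G] (C : Subgroup G) : HE G C := HNNExtension.t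

/-- The inclusion of the base group. -/
abbrev inc {G : Type*} [Group G] (C : Subgroup G) : G →* HE G C := HNNExtension.of

open HNNExtension HNNExtension.NormalWord

lemma toSubgroup_self {G : Type*} [Group G] (C : Subgroup G) (e : ℤˣ) :
    toSubgroup C C e = C := by simp [toSubgroup]

lemma st_commute {G : Type*} [Group G] (C : Subgroup G) {c : G} (hc : c ∈ C) :
    Commute (st C) (inc C c) := by
  have := t_mul_of (φ := MulEquiv.refl C) ⟨c, hc⟩
  exact this

lemma conj_mem {G : Type*} [Group G] (C : Subgroup G) (e : ℤˣ) (b : G)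
    (h : st C ^ (e : ℤ) * inc C b * st C ^ (-(e : ℤ)) ∈ (inc C).range) : b ∈ C := by
  by_contra hb
  let w : ReducedWord G C C :=
    { head := 1
      toList := [(e, b), (-e, 1)]
      chain := by simp [toSubgroup_self, hb] }
  have := ReducedWord.toList_eq_nil_of_mem_of_range (MulEquiv.refl C) w (by
    simpa [ReducedWord.prod, w, mul_assoc] using h)
  simp [w] at this

lemma exists_word {G : Type*} [Group G] (C : Subgroup G) (x : HE G C) :
    ∃ w : ReducedWord G C C, w.prod (MulEquiv.refl C) = x := by
  obtain ⟨d⟩ := TransversalPair.nonempty G C C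
  exact ⟨((NormalWord.equiv (MulEquiv.refl C) d) x).toReducedWord,
    (NormalWord.equiv (MulEquiv.refl C) d).symm_apply_apply x⟩

section
variable {G H : Type*} [Group G] [Group H] (C : Subgroup G) (f : G →* H) (u : H)

/-- The first syllable absorbed on the left. -/
def nxt : List (ℤˣ × G) → H
  | [] => 1
  | (e, _) :: _ => u ^ (e : ℤ)

/-- Translating words of `HE G C` to words of `HE H f.range`. -/
def cnv : List (ℤˣ × G) → List (ℤˣ × H)
  | [] => []
  | (e, b) :: l => (e, u ^ (e : ℤ) * f b * nxt u l) :: cnv l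

/-- The map `HE G C → HE H f.range` sending `t` to `u t u`. -/
def bigMap (hC : ∀ c ∈ C, Commute u (f c)) : HE G C →* HE H f.range :=
  HNNExtension.lift ((inc f.range).comp f) (inc f.range u * st f.range * inc f.range u) (by
    intro a
    have h1 : Commute (inc f.range u) (inc f.range (f a)) := (hC a a.2).map _
    have h2 : Commute (st f.range) (inc f.range (f a)) := st_commute _ ⟨_, rfl⟩
    exact ((h1.mul_left h2).mul_left h1).eq)

lemma bigMap_list (hC : ∀ c ∈ C, Commute u (f c)) (l : List (ℤˣ × G)) :
    (l.map (fun x => (bigMap C f u hC) (st C ^ (x.1 : ℤ) * inc C x.2))).prod =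
      inc f.range (nxt u l) *
        ((cnv f u l).map (fun x => st f.range ^ (x.1 : ℤ) * inc f.range x.2)).prod := by
  induction l with
  | nil => simp [nxt, cnv]
  | cons a l ih =>
    obtain ⟨e, b⟩ := a
    rw [List.map_cons, List.prod_cons, ih]
    simp only [nxt, cnv, List.map_cons, List.prod_cons, map_mul, map_zpow]
    have h1 : bigMap C f u hC (st C) = inc f.range u * st f.range * inc f.range u :=
      HNNExtension.lift_t _ _ _
    have h2 : bigMap C f u hC (inc C b) = inc f.range (f b) := HNNExtension.lift_of _ _ _ _
    rw [h1, h2]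
    rcases Int.units_eq_one_or e with rfl | rfl
    · simp [mul_assoc]
    · simp [mul_assoc]

lemma cnv_chain (key : ∀ (e : ℤˣ) b, u ^ (e : ℤ) * f b * u ^ (-(e : ℤ)) ∈ f.range → b ∈ C)
    (l : List (ℤˣ × G)) (hl : l.IsChain (fun a b => a.2 ∈ toSubgroup C C a.1 → a.1 = b.1)) :
    (cnv f u l).IsChain
      (fun a b => a.2 ∈ toSubgroup f.range f.range a.1 → a.1 = b.1) := by
  induction l with
  | nil => simp [cnv]
  | cons a l ih =>
    obtain ⟨e, b⟩ := a
    cases l with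
    | nil => simp [cnv]
    | cons a' l =>
      obtain ⟨e', b'⟩ := a'
      rw [List.isChain_cons_cons] at hl
      have h2 := ih hl.2
      simp only [cnv] at h2 ⊢
      rw [List.isChain_cons_cons]
      refine ⟨?_, h2⟩
      have h1 := hl.1
      simp only [toSubgroup_self, nxt] at h1 ⊢
      intro hm
      by_contra hne
      have : (e' : ℤ) = -(e : ℤ) := by
        rcases Int.units_eq_one_or e with rfl | rfl <;>
        rcases Int.units_eq_one_or e' with rfl | rfl <;>
        first | exact absurd rfl hne | simp
      rw [this] at hm
      exact hne (h1 (key e b hm))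

lemma bigMap_injective (hf : Function.Injective f) (hC : ∀ c ∈ C, Commute u (f c))
    (key : ∀ (e : ℤˣ) b, u ^ (e : ℤ) * f b * u ^ (-(e : ℤ)) ∈ f.range → b ∈ C) :
    Function.Injective (bigMap C f u hC) := by
  rw [injective_iff_map_eq_one]
  intro x hx
  obtain ⟨w, rfl⟩ := exists_word C x
  have hof : ∀ b, bigMap C f u hC (inc C b) = inc f.range (f b) :=
    fun b => HNNExtension.lift_of _ _ _ _
  let w' : ReducedWord H f.range f.range :=
    { head := f w.head * nxt u w.toList
      toList := cnv f u w.toList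
      chain := cnv_chain C f u key _ w.chain }
  have hw' : w'.prod (MulEquiv.refl f.range) = 1 := by
    rw [← hx]
    simp only [ReducedWord.prod, w']
    rw [map_mul, map_mul, map_list_prod, List.map_map, hof, mul_assoc]
    congr 1
    exact (bigMap_list C f u hC w.toList).symm
  have hnil := ReducedWord.toList_eq_nil_of_mem_of_range (MulEquiv.refl f.range) w'
    (by rw [hw']; exact one_mem _)
  have hl : w.toList = [] := by
    cases hw : w.toList with
    | nil => rfl
    | cons a l => simp [w', hw, cnv] at hnil
  simp only [ReducedWord.prod, hl, List.map_nil, List.prod_nil, mul_one] at hx ⊢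
  rw [hof] at hx
  have h1 : f w.head = 1 := HNNExtension.of_injective _ (hx.trans (map_one _).symm)
  have h2 : w.head = 1 := hf (h1.trans (map_one f).symm)
  rw [h2, map_one]

end

/-! ### The split graph -/

section
variable {V : Type} (Λ : SimpleGraph V) (v : V) (N : Set V)

/-- Split `v`: the neighbours in `N` are moved to the new vertex `some none`, and
`none` is a new vertex adjacent to the two halves of `v`. -/
def splitGraph : SimpleGraph (Option (Option V)) :=
  SimpleGraph.fromRel (fun x y =>
    match x, y with
    | some (some a), some (some b) => Λ.Adj a b ∧ ¬(a = v ∧ b ∈ N) ∧ ¬(b = v ∧ a ∈ N)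
    | some none, some (some a) => a ∈ N
    | none, some (some a) => a = v
    | none, some none => True
    | _, _ => False)

lemma split_ss (a b : V) : (splitGraph Λ v N).Adj (some (some a)) (some (some b)) ↔
    Λ.Adj a b ∧ ¬(a = v ∧ b ∈ N) ∧ ¬(b = v ∧ a ∈ N) := by
  simp only [splitGraph, SimpleGraph.fromRel_adj, ne_eq, Option.some.injEq]
  constructor
  · rintro ⟨_, h | h⟩
    · exact h
    · exact ⟨h.1.symm, h.2.2, h.2.1⟩
  · intro h
    exact ⟨h.1.ne, Or.inl h⟩

lemma split_sn (a : V) : (splitGraph Λ v N).Adj (some (some a)) (some none) ↔ a ∈ N := by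
  simp [splitGraph]

lemma split_ns (a : V) : (splitGraph Λ v N).Adj (some none) (some (some a)) ↔ a ∈ N := by
  simp [splitGraph]

lemma split_0s (a : V) : (splitGraph Λ v N).Adj none (some (some a)) ↔ a = v := by
  simp [splitGraph]

lemma split_s0 (a : V) : (splitGraph Λ v N).Adj (some (some a)) none ↔ a = v := by
  simp [splitGraph]

lemma split_0n : (splitGraph Λ v N).Adj none (some none) := by
  simp [splitGraph]

/-! ### The embedding -/

/-- Complement of neighbours of the vertex `v`. -/
def S0 : Set V := {x | x ≠ v ∧ ¬ Λ.Adj v x}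
/-- Vertices commuting with the first half. -/
def S1 : Set V := {x | x ≠ v ∧ ¬ (Λ.Adj v x ∧ x ∉ N)}
/-- Vertices commuting with the second half. -/
def S2 : Set V := {x | x ≠ v ∧ x ∉ N}

/-- The intermediate group. -/
abbrev HH := HE (GG Λ) (par Λ (S1 Λ v N)) × HE (GG Λ) (par Λ (S2 v N))

/-- The diagonal inclusion. -/
def diag : GG Λ →* HH Λ v N := (inc _).prod (inc _)

/-- The two stable letters. -/
def uu : HH Λ v N := (st _, st _)

lemma diag_injective : Function.Injective (diag Λ v N) := fun _ _ h =>
  HNNExtension.of_injective _ (congrArg Prod.fst h)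

lemma uu_key (e : ℤˣ) (b : GG Λ)
    (h : uu Λ v N ^ (e : ℤ) * diag Λ v N b * uu Λ v N ^ (-(e : ℤ)) ∈ (diag Λ v N).range) :
    b ∈ par Λ (S0 Λ v) := by
  obtain ⟨g, hg⟩ := h
  have h1 : b ∈ par Λ (S1 Λ v N) := conj_mem _ e b ⟨g, congrArg Prod.fst hg⟩
  have h2 : b ∈ par Λ (S2 v N) := conj_mem _ e b ⟨g, congrArg Prod.snd hg⟩
  have h3 := par_inter Λ _ _ h1 h2
  have : S1 Λ v N ∩ S2 v N ⊆ S0 Λ v := by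
    rintro x ⟨⟨h, h'⟩, _, h''⟩
    exact ⟨h, fun hh => h' ⟨hh, h''⟩⟩
  exact Subgroup.closure_mono (Set.image_mono this) h3

lemma s1_comm {x : V} (hx : x ∈ S1 Λ v N) :
    Commute (st (par Λ (S1 Λ v N))) (inc (par Λ (S1 Λ v N)) (gen Λ x)) :=
  st_commute _ (Subgroup.subset_closure ⟨x, hx, rfl⟩)

lemma s2_comm {x : V} (hx : x ∈ S2 v N) :
    Commute (st (par Λ (S2 v N))) (inc (par Λ (S2 v N)) (gen Λ x)) :=
  st_commute _ (Subgroup.subset_closure ⟨x, hx, rfl⟩)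


lemma uu_comm (hN : ∀ x ∈ N, Λ.Adj v x) (c : GG Λ) (hc : c ∈ par Λ (S0 Λ v)) : Commute (uu Λ v N) (diag Λ v N c) := by
  refine par_commute Λ _ _ _ ?_ hc
  intro x hx
  refine Commute.prod ?_ ?_
  · exact s1_comm Λ v N ⟨hx.1, fun h => hx.2 h.1⟩
  · exact s2_comm Λ v N ⟨hx.1, fun h => hx.2 (hN x h)⟩

open Classical in
theorem exists_embedding (hN : ∀ x ∈ N, Λ.Adj v x) :
    ∃ φ : GG Λ →* GG (splitGraph Λ v N), Function.Injective φ := by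
  set Γ := splitGraph Λ v N with hΓ
  -- the map to be shown injective
  let p : GG Γ := gen Γ (some (some v)) * gen Γ (some none)
  have hp : ∀ y, y ≠ v → ¬ Λ.Adj v y → Commute (p * gen Γ none * p) (gen Γ (some (some y))) := by
    intro y hy hvy
    have h1 : Commute p (gen Γ (some (some y))) := by
      refine Commute.mul_left (gen_commute _ ?_) (gen_commute _ ?_)
      · rw [split_ss]; tauto
      · rw [split_ns]; exact fun h => hvy (hN y h)
    have h2 : Commute (gen Γ none) (gen Γ (some (some y))) :=
      gen_commute _ (by rw [split_0s]; exact hy)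
    exact (h1.mul_left h2).mul_left h1
  let φ : GG Λ →* GG Γ :=
    gLift Λ (fun x => if x = v then p * gen Γ none * p else gen Γ (some (some x))) (by
      intro x y hxy
      split_ifs with h1 h2 h2
      · exact Commute.refl _
      · subst h1; exact hp y h2 hxy
      · subst h2; exact (hp x h1 (fun h => hxy h.symm)).symm
      · exact gen_commute _ (by rw [split_ss]; tauto))
  -- the HNN decomposition of the source
  let χ : GG Λ →* HE (GG Λ) (par Λ (S0 Λ v)) :=
    gLift Λ (fun x => if x = v then st _ else inc _ (gen Λ x)) (by
      have key : ∀ y, y ≠ v → ¬ Λ.Adj v y →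
          Commute (st (par Λ (S0 Λ v))) (inc (par Λ (S0 Λ v)) (gen Λ y)) := fun y h1 h2 =>
        st_commute _ (Subgroup.subset_closure ⟨y, ⟨h1, h2⟩, rfl⟩)
      intro x y hxy
      split_ifs with h1 h2 h2
      · exact Commute.refl _
      · subst h1; exact key y h2 hxy
      · subst h2; exact (key x h1 (fun h => hxy h.symm)).symm
      · exact (gen_commute _ hxy).map _)
  have hχ : Function.Injective χ := by
    let ρ : HE (GG Λ) (par Λ (S0 Λ v)) →* GG Λ :=
      HNNExtension.lift (MonoidHom.id _) (gen Λ v) (by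
        intro a
        exact (par_commute Λ (S0 Λ v) (MonoidHom.id _) (gen Λ v)
          (fun x hx => gen_commute _ hx.2) a.2).eq)
    have : ρ.comp χ = MonoidHom.id _ := by
      apply g_ext
      intro x
      simp only [MonoidHom.comp_apply, χ, gLift_gen]
      split_ifs with h
      · subst h; exact HNNExtension.lift_t _ _ _
      · exact HNNExtension.lift_of _ _ _ _
    exact Function.LeftInverse.injective (g := ρ) (fun x => DFunLike.congr_fun this x)
  let F := bigMap (par Λ (S0 Λ v)) (diag Λ v N) (uu Λ v N) (uu_comm Λ v N hN)
  have hF : Function.Injective F :=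
    bigMap_injective _ _ _ (diag_injective Λ v N) _ (uu_key Λ v N)
  -- the map from the target
  let m : Option (Option V) → HE (HH Λ v N) (diag Λ v N).range := fun x =>
    match x with
    | none => st _
    | some none => inc _ (1, st _)
    | some (some x) => if x = v then inc _ (st _, 1) else inc _ (diag Λ v N (gen Λ x))
  have hm1 : ∀ x, x ≠ v → Commute (m none) (m (some (some x))) := by
    intro x hx
    simp only [m, hx, if_false]
    exact st_commute _ ⟨_, rfl⟩
  have hm2 : ∀ x, x ∉ N → Commute (m (some none)) (m (some (some x))) := by
    intro x hx
    simp only [m]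
    split_ifs with h
    · refine Commute.map ?_ _
      exact Commute.prod (Commute.one_left _) (Commute.one_right _)
    · refine Commute.map ?_ _
      exact Commute.prod (Commute.one_left _) (s2_comm Λ v N ⟨h, hx⟩)
  have hm3 : ∀ x, x ≠ v → ¬ (Λ.Adj v x ∧ x ∉ N) →
      Commute (m (some (some v))) (m (some (some x))) := by
    intro x hx hx'
    simp only [m, hx, if_false, if_true]
    refine Commute.map ?_ _
    exact Commute.prod (s1_comm Λ v N ⟨hx, hx'⟩) (Commute.one_left _)
  have hvN : v ∉ N := fun h => (hN v h).ne rfl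
  let ψ : GG Γ →* HE (HH Λ v N) (diag Λ v N).range := gLift Γ m (by
    rintro (_ | _ | x) (_ | _ | y) hxy
    · exact Commute.refl _
    · exact absurd (split_0n Λ v N) hxy
    · exact hm1 y (by rwa [split_0s] at hxy)
    · exact absurd (split_0n Λ v N).symm hxy
    · exact Commute.refl _
    · exact hm2 y (by rwa [split_ns] at hxy)
    · exact (hm1 x (by rwa [split_s0] at hxy)).symm
    · exact (hm2 x (by rwa [split_sn] at hxy)).symm
    · rw [split_ss] at hxy
      by_cases hx : x = v
      · subst hx
        by_cases hy : y = x
        · subst hy; exact Commute.refl _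
        · exact hm3 y hy (by tauto)
      · by_cases hy : y = v
        · subst hy
          exact (hm3 x hx (by
            rintro ⟨h1, h2⟩
            exact hxy ⟨h1.symm, by tauto, by tauto⟩)).symm
        · simp only [m, hx, hy, if_false]
          refine Commute.map (Commute.map (gen_commute _ ?_) _) _
          tauto)
  have hcomp : ψ.comp φ = F.comp χ := by
    apply g_ext
    intro x
    simp only [MonoidHom.comp_apply, φ, χ, gLift_gen]
    split_ifs with h
    · have h1 : F (st _) = inc _ (uu Λ v N) * st _ * inc _ (uu Λ v N) :=
        HNNExtension.lift_t _ _ _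
      have h2 : ψ p = inc _ (uu Λ v N) := by
        simp only [p, ψ, map_mul, gLift_gen, m, if_true]
        rw [← map_mul]
        simp [uu]
      have h3 : ψ (gen Γ none) = st _ := gLift_gen _ _ _ _
      rw [h1, map_mul, map_mul, h2, h3]
    · have h1 : F (inc _ (gen Λ x)) = inc _ (diag Λ v N (gen Λ x)) :=
        HNNExtension.lift_of _ _ _ _
      rw [h1]
      simp only [ψ, gLift_gen, m, h, if_false]
  refine ⟨φ, ?_⟩
  have : Function.Injective (ψ.comp φ) := by
    rw [hcomp]; exact hF.comp hχ
  exact Function.Injective.of_comp (f := ψ) this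

/-! ### Degrees -/

theorem not_embeds [Fintype V] (hN : ∀ x ∈ N, Λ.Adj v x) (hN2 : N.ncard = 2) (hd : 4 ≤ (Λ.neighborSet v).ncard) :
    ¬ Nonempty (Λ ↪g splitGraph Λ v N) := by
  rintro ⟨e⟩
  set Γ := splitGraph Λ v N with hΓ
  set D := (Λ.neighborSet v).ncard with hD
  have hinj : Function.Injective (fun x : V => some (some x)) :=
    (Option.some_injective _).comp (Option.some_injective _)
  let P : Set V := {x | D ≤ (Λ.neighborSet x).ncard}
  let Q : Set (Option (Option V)) := {x | D ≤ (Γ.neighborSet x).ncard}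
  have h1 : P.ncard ≤ Q.ncard := by
    refine Set.ncard_le_ncard_of_injOn e ?_ e.injective.injOn (Set.toFinite _)
    intro x hx
    refine le_trans (show D ≤ (Λ.neighborSet x).ncard from hx) ?_
    refine Set.ncard_le_ncard_of_injOn e ?_ e.injective.injOn (Set.toFinite _)
    intro y hy
    exact e.map_rel_iff.2 hy
  have hvN : v ∉ N := fun h => (hN v h).ne rfl
  have h2 : Q ⊆ (fun x : V => some (some x)) '' (P \ {v}) := by
    rintro (_ | _ | x) hx
    · exfalso
      have : Γ.neighborSet none ⊆ {some (some v), some none} := by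
        rintro (_ | _ | y) hy
        · exact absurd hy (Γ.loopless.irrefl _)
        · simp
        · have := (split_0s Λ v N y).1 hy
          simp [this]
      have h3 := Set.ncard_le_ncard this (Set.toFinite _)
      have h4 := Set.ncard_insert_le (some (some v)) ({some none} : Set (Option (Option V)))
      have h5 : D ≤ _ := hx
      rw [Set.ncard_singleton] at h4
      omega
    · exfalso
      have : Γ.neighborSet (some none) ⊆ insert none ((fun x : V => some (some x)) '' N) := by
        rintro (_ | _ | y) hy
        · simp
        · exact absurd hy (Γ.loopless.irrefl _)
        · have := (split_ns Λ v N y).1 hy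
          simp [this]
      have h3 := Set.ncard_le_ncard this (Set.toFinite _)
      have h4 := Set.ncard_insert_le none ((fun x : V => some (some x)) '' N)
      rw [Set.ncard_image_of_injective _ hinj] at h4
      have h5 : D ≤ _ := hx
      omega
    · have h5 : D ≤ _ := hx
      by_cases hxv : x = v
      · exfalso
        subst hxv
        have : Γ.neighborSet (some (some x)) ⊆
            insert none ((fun x : V => some (some x)) '' (Λ.neighborSet x \ N)) := by
          rintro (_ | _ | y) hy
          · simp
          · exact absurd ((split_sn Λ x N x).1 hy) hvN
          · have := (split_ss Λ x N x y).1 hy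
            right
            exact ⟨y, ⟨this.1, fun h => this.2.1 ⟨rfl, h⟩⟩, rfl⟩
        have h3 := Set.ncard_le_ncard this (Set.toFinite _)
        have h4 := Set.ncard_insert_le none
          ((fun x : V => some (some x)) '' (Λ.neighborSet x \ N))
        rw [Set.ncard_image_of_injective _ hinj] at h4
        have h6 := Set.ncard_sdiff_add_ncard_of_subset (s := N) (t := Λ.neighborSet x) hN
          (Set.toFinite _)
        omega
      · refine ⟨x, ⟨?_, hxv⟩, rfl⟩
        refine le_trans h5 ?_
        by_cases hxN : x ∈ N
        · have : Γ.neighborSet (some (some x)) ⊆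
              insert (some none) ((fun x : V => some (some x)) '' (Λ.neighborSet x \ {v})) := by
            rintro (_ | _ | y) hy
            · exact absurd ((split_s0 Λ v N x).1 hy) hxv
            · simp
            · have := (split_ss Λ v N x y).1 hy
              right
              exact ⟨y, ⟨this.1, fun h => this.2.2 ⟨h, hxN⟩⟩, rfl⟩
          have h3 := Set.ncard_le_ncard this (Set.toFinite _)
          have h4 := Set.ncard_insert_le (some none)
            ((fun x : V => some (some x)) '' (Λ.neighborSet x \ {v}))
          rw [Set.ncard_image_of_injective _ hinj] at h4
          have h6 := Set.ncard_sdiff_singleton_add_one (s := Λ.neighborSet x) (a := v)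
            (hN x hxN).symm (Set.toFinite _)
          omega
        · have : Γ.neighborSet (some (some x)) ⊆
              ((fun x : V => some (some x)) '' (Λ.neighborSet x)) := by
            rintro (_ | _ | y) hy
            · exact absurd ((split_s0 Λ v N x).1 hy) hxv
            · exact absurd ((split_sn Λ v N x).1 hy) hxN
            · exact ⟨y, ((split_ss Λ v N x y).1 hy).1, rfl⟩
          have h3 := Set.ncard_le_ncard this (Set.toFinite _)
          rwa [Set.ncard_image_of_injective _ hinj] at h3
  have h3 := Set.ncard_le_ncard h2 (Set.toFinite _)
  rw [Set.ncard_image_of_injective _ hinj] at h3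
  have h4 := Set.ncard_sdiff_singleton_add_one (s := P) (a := v) (le_refl D) (Set.toFinite _)
  omega

end

end SplitVertex

/-- If `Λ` has a vertex of degree at least 4, then there is a finite graph `Γ` with
`G(Λ) ↪ G(Γ)` but `Λ` not an induced subgraph of `Γ`. -/
theorem statement16 {V : Type} [Fintype V] (Λ : SimpleGraph V)
    (h : ∃ u : V, 4 ≤ (Λ.neighborSet u).ncard) :
    ∃ (W : Type) (_ : Fintype W) (Γ : SimpleGraph W),
      (∃ φ : GG Λ →* GG Γ, Function.Injective φ) ∧ ¬ Nonempty (Λ ↪g Γ) := by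
  obtain ⟨v, hd⟩ := h
  obtain ⟨N, hN, hN2⟩ := Set.exists_subset_card_eq (s := Λ.neighborSet v) (n := 2) (by omega)
  exact ⟨Option (Option V), inferInstance, SplitVertex.splitGraph Λ v N,
    SplitVertex.exists_embedding Λ v N hN, SplitVertex.not_embeds Λ v N hN hN2 hd⟩
end

section
/- Suppose Λ is a finite simple graph whose maximum vertex degree equals 3, and for every vertex x of degree 3 in Λ, no two neighbors of x are adjacent to each other (i.e., the link of x contains no edge). Then there exists a finite simple graph Γ such that there is an injective group homomorphism from G(Λ) into G(Γ), but Λ does not embed into Γ as a full (induced) subgraph. -/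
open SimpleGraph

section HNNPart

open HNNExtension HNNExtension.NormalWord

variable {B : Type} [Group B]

lemma toSubgroup_self (A : Subgroup B) (u : ℤˣ) : toSubgroup A A u = A := by
  rcases Int.units_eq_one_or u with rfl | rfl <;> rfl

/-- HNN extension with trivial twisting. -/
abbrev HN (C : Subgroup B) : Type := HNNExtension B C C (MulEquiv.refl C)

/-- The part of a word after its head. -/
def wprod (C : Subgroup B) (l : List (ℤˣ × B)) : HN C :=
  (l.map (fun x => (t ^ (x.1 : ℤ) * of x.2 : HN C))).prod

lemma wprod_cons (C : Subgroup B) (u : ℤˣ) (b : B) (l : List (ℤˣ × B)) :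
    wprod C ((u, b) :: l) = t ^ (u : ℤ) * of b * wprod C l := by
  simp [wprod]

/-- Reducedness of a list of syllables. -/
def Red (C : Subgroup B) (l : List (ℤˣ × B)) : Prop :=
  l.IsChain (fun a b => a.2 ∈ C → a.1 = b.1)

lemma red_cons_cons (C : Subgroup B) (a b : ℤˣ × B) (l : List (ℤˣ × B)) :
    Red C (a :: b :: l) ↔ (a.2 ∈ C → a.1 = b.1) ∧ Red C (b :: l) := by
  simp [Red]

lemma britton (C : Subgroup B) (l : List (ℤˣ × B)) (hl : Red C l) (h g : B)
    (e : (of h : HN C) * wprod C l = of g) : l = [] := by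
  let w : ReducedWord B C C := ⟨h, l, by simpa [Red, toSubgroup_self] using hl⟩
  exact ReducedWord.toList_eq_nil_of_mem_of_range (φ := MulEquiv.refl C) w ⟨g, e.symm⟩

lemma exists_red (C : Subgroup B) (g : HN C) :
    ∃ (h : B) (l : List (ℤˣ × B)), Red C l ∧ g = of h * wprod C l := by
  obtain ⟨d⟩ := TransversalPair.nonempty B C C
  let w := NormalWord.equiv (MulEquiv.refl C) d g
  refine ⟨w.head, w.toList, by simpa [Red, toSubgroup_self] using w.chain, ?_⟩
  exact ((NormalWord.equiv (MulEquiv.refl C) d).symm_apply_apply g).symm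

variable (C₁ C₂ : Subgroup B)

/-- the big group -/
abbrev HH : Type := HN (B := HN C₂) (C₁.map (of : B →* HN C₂))

lemma t_comm (C : Subgroup B) (c : B) (hc : c ∈ C) : (t : HN C) * of c = of c * t :=
  t_mul_of (φ := MulEquiv.refl C) ⟨c, hc⟩

/-- base into the big group -/
def bb : B →* HH C₁ C₂ := (of : HN C₂ →* HH C₁ C₂).comp of

/-- second stable letter -/
def s2 : HH C₁ C₂ := of (t : HN C₂)

/-- first stable letter -/
def s1 : HH C₁ C₂ := t

lemma s1_comm (c : B) (hc : c ∈ C₁) : Commute (s1 C₁ C₂) (bb C₁ C₂ c) :=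
  t_comm _ _ ⟨c, hc, rfl⟩

lemma s2_comm (c : B) (hc : c ∈ C₂) : Commute (s2 C₁ C₂) (bb C₁ C₂ c) := by
  have := congrArg (of : HN C₂ →* HH C₁ C₂) (t_comm C₂ c hc)
  rw [map_mul, map_mul] at this
  exact this

/-- the comparison map -/
def psi : HN (C₁ ⊓ C₂) →* HH C₁ C₂ :=
  lift (bb C₁ C₂) ((s1 C₁ C₂)⁻¹ * s2 C₁ C₂ * s1 C₁ C₂) (by
    rintro ⟨a, h1, h2⟩
    have e1 := s1_comm C₁ C₂ a h1
    have e2 := s2_comm C₁ C₂ a h2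
    exact ((e1.inv_left.mul_left e2).mul_left e1))

lemma psi_t_pow (n : ℤ) : psi C₁ C₂ (t ^ n) = (s1 C₁ C₂)⁻¹ * s2 C₁ C₂ ^ n * s1 C₁ C₂ := by
  rw [map_zpow, psi, lift_t]
  have := conj_zpow (i := n) (a := (s1 C₁ C₂)⁻¹) (b := s2 C₁ C₂)
  simpa using this

lemma psi_of (b : B) : psi C₁ C₂ (of b) = bb C₁ C₂ b := by
  rw [psi, lift_of]

lemma of_red_notMem (u : ℤˣ) (c : B) (q : List (ℤˣ × B)) (hq : Red C₂ ((u, c) :: q)) :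
    wprod C₂ ((u, c) :: q) ∉ C₁.map (of : B →* HN C₂) := by
  rintro ⟨g, -, hg⟩
  have := britton C₂ _ hq 1 g (by simp [hg])
  simp at this

lemma key (l : List (ℤˣ × B)) : ∀ (u : ℤˣ) (b : B), Red (C₁ ⊓ C₂) ((u, b) :: l) →
    ∃ (c : B) (q : List (ℤˣ × B)) (h : HN C₂) (r : List (ℤˣ × HN C₂)),
      Red C₂ ((u, c) :: q) ∧ Red (C₁.map (of : B →* HN C₂)) ((1, h) :: r) ∧
      psi C₁ C₂ (wprod _ ((u, b) :: l)) =
        wprod (C₁.map (of : B →* HN C₂)) ((-1, wprod C₂ ((u, c) :: q)) :: (1, h) :: r) := by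
  induction l with
  | nil =>
    intro u b _
    refine ⟨1, [], of b, [], by simp [Red], by simp [Red], ?_⟩
    rw [wprod_cons, map_mul, map_mul, psi_t_pow, psi_of]
    simp [wprod, s1, s2, bb, mul_assoc]
  | cons a l ih =>
    obtain ⟨u', b'⟩ := a
    intro u b hred
    rw [red_cons_cons] at hred
    obtain ⟨c, q, h, r, hq, hr, e⟩ := ih u' b' hred.2
    by_cases hb : b ∈ C₁
    · refine ⟨b, (u', c) :: q, h, r, ?_, hr, ?_⟩
      · rw [red_cons_cons]
        exact ⟨fun h2 => hred.1 ⟨hb, h2⟩, hq⟩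
      · rw [wprod_cons, map_mul, map_mul, psi_t_pow, psi_of, e, wprod_cons, wprod_cons _ (-1)]
        have e1 : s1 C₁ C₂ * bb C₁ C₂ b = bb C₁ C₂ b * s1 C₁ C₂ := s1_comm C₁ C₂ b hb
        have e1' : bb C₁ C₂ b = s1 C₁ C₂ * bb C₁ C₂ b * (s1 C₁ C₂)⁻¹ := by
          rw [e1]; simp
        rw [wprod_cons C₂ u, map_mul, map_mul, map_zpow]
        have e2 : (of (of b : HN C₂) : HH C₁ C₂) = bb C₁ C₂ b := rfl
        have e3 : (of (t : HN C₂) : HH C₁ C₂) = s2 C₁ C₂ := rfl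
        have e4 : (t : HH C₁ C₂) = s1 C₁ C₂ := rfl
        rw [e2, e3, e4]
        nth_rewrite 2 [e1']
        rw [e1']
        simp [mul_assoc]
    · refine ⟨1, [], of b, (-1, wprod C₂ ((u', c) :: q)) :: (1, h) :: r, by simp [Red], ?_, ?_⟩
      · rw [red_cons_cons, red_cons_cons]
        refine ⟨fun hx => absurd ?_ hb, fun hx => absurd hx (of_red_notMem C₁ C₂ _ _ _ hq), hr⟩
        obtain ⟨y, hy, hyb⟩ := hx
        rw [of_injective _ hyb] at hy
        exact hy
      · rw [wprod_cons, map_mul, map_mul, psi_t_pow, psi_of, e]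
        rw [wprod_cons _ (-1), wprod_cons _ (-1), wprod_cons _ 1, wprod_cons _ 1,
          wprod_cons _ (-1)]
        simp [wprod, s1, s2, bb, mul_assoc]

lemma psi_injective : Function.Injective (psi C₁ C₂) := by
  rw [injective_iff_map_eq_one]
  intro g hg
  obtain ⟨h, l, hl, rfl⟩ := exists_red _ g
  cases l with
  | nil =>
    have : wprod (C₁ ⊓ C₂) [] = 1 := rfl
    rw [this, mul_one, psi_of] at hg
    rw [this, mul_one]
    have h1 : (of h : HN C₂) = 1 := of_injective (φ := MulEquiv.refl _) (by rw [map_one]; exact hg)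
    have h2 : h = 1 := of_injective (φ := MulEquiv.refl C₂) (by rw [map_one]; exact h1)
    rw [h2, map_one]
  | cons a l =>
    exfalso
    obtain ⟨u, b⟩ := a
    obtain ⟨c, q, k, r, hq, hr, e⟩ := key C₁ C₂ l u b hl
    rw [map_mul, psi_of, e] at hg
    have := britton _ _ ((red_cons_cons _ _ _ _).2
      ⟨fun hx => absurd hx (of_red_notMem C₁ C₂ _ _ _ hq), hr⟩) (of h) 1
      (by rw [map_one]; exact hg)
    simp at this

end HNNPart

section RaagPart

/-- generator -/
def gen {V : Type} (Λ : SimpleGraph V) (v : V) : GG Λ := PresentedGroup.of v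

lemma gen_comm {V : Type} (Λ : SimpleGraph V) (v w : V) (h : ¬ Λ.Adj v w) :
    Commute (gen Λ v) (gen Λ w) := by
  by_cases hvw : v = w
  · subst hvw; exact Commute.refl _
  · have : (PresentedGroup.mk (raagRels Λᶜ)) (FreeGroup.of v * FreeGroup.of w *
        (FreeGroup.of v)⁻¹ * (FreeGroup.of w)⁻¹) = 1 :=
      PresentedGroup.one_of_mem ⟨v, w, by simp [hvw, h], rfl⟩
    rw [map_mul, map_mul, map_mul, map_inv, map_inv, mul_inv_eq_one, mul_inv_eq_iff_eq_mul] at this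
    exact this

/-- Universal property. -/
def ggLift {V : Type} (Λ : SimpleGraph V) {H : Type} [Group H] (f : V → H)
    (hf : ∀ v w, v ≠ w → ¬ Λ.Adj v w → Commute (f v) (f w)) : GG Λ →* H :=
  PresentedGroup.toGroup (f := f) (by
    rintro r ⟨u, v, h, rfl⟩
    rw [SimpleGraph.compl_adj] at h
    have := (hf u v h.1 h.2).eq
    simp [this])

lemma ggLift_gen {V : Type} (Λ : SimpleGraph V) {H : Type} [Group H] (f : V → H)
    (hf : ∀ v w, v ≠ w → ¬ Λ.Adj v w → Commute (f v) (f w)) (v : V) :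
    ggLift Λ f hf (gen Λ v) = f v := PresentedGroup.toGroup.of _

lemma gg_ext {V : Type} (Λ : SimpleGraph V) {H : Type} [Group H] (f g : GG Λ →* H)
    (h : ∀ v, f (gen Λ v) = g (gen Λ v)) : f = g := PresentedGroup.ext h

/-- parabolic subgroup -/
def par {V : Type} (Λ : SimpleGraph V) (S : Set V) : Subgroup (GG Λ) :=
  Subgroup.closure (gen Λ '' S)

lemma gen_mem_par {V : Type} (Λ : SimpleGraph V) (S : Set V) (v : V) (hv : v ∈ S) :
    gen Λ v ∈ par Λ S := Subgroup.subset_closure ⟨v, hv, rfl⟩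

open Classical in
/-- retraction -/
noncomputable def retr {V : Type} (Λ : SimpleGraph V) (S : Set V) : GG Λ →* GG Λ :=
  ggLift Λ (fun v => if v ∈ S then gen Λ v else 1) (by
    intro v w _ h
    split_ifs
    · exact gen_comm Λ v w h
    · exact Commute.one_right _
    · exact Commute.one_left _
    · exact Commute.one_left _)

lemma retr_eq {V : Type} (Λ : SimpleGraph V) (S : Set V) (g : GG Λ) (hg : g ∈ par Λ S) :
    retr Λ S g = g := by
  have : par Λ S ≤ (retr Λ S).eqLocus (MonoidHom.id _) := by
    refine (Subgroup.closure_le _).2 ?_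
    rintro _ ⟨v, hv, rfl⟩
    change retr Λ S (gen Λ v) = gen Λ v
    rw [retr, ggLift_gen, if_pos hv]
  exact this hg

lemma retr_mem {V : Type} (Λ : SimpleGraph V) (S T : Set V) (g : GG Λ) (hg : g ∈ par Λ T) :
    retr Λ S g ∈ par Λ (S ∩ T) := by
  have : par Λ T ≤ (par Λ (S ∩ T)).comap (retr Λ S) := by
    refine (Subgroup.closure_le _).2 ?_
    rintro _ ⟨v, hv, rfl⟩
    change retr Λ S (gen Λ v) ∈ par Λ (S ∩ T)
    rw [retr, ggLift_gen]
    split_ifs with h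
    · exact gen_mem_par _ _ _ ⟨h, hv⟩
    · exact one_mem _
  exact this hg

lemma par_inf {V : Type} (Λ : SimpleGraph V) (S T : Set V) :
    par Λ S ⊓ par Λ T ≤ par Λ (S ∩ T) := by
  rintro g ⟨h1, h2⟩
  rw [← retr_eq Λ S g h1]
  exact retr_mem Λ S T g h2

lemma par_comm {V : Type} (Λ : SimpleGraph V) (S : Set V) (x : V) (h : ∀ v ∈ S, ¬ Λ.Adj x v)
    (g : GG Λ) (hg : g ∈ par Λ S) : Commute (gen Λ x) g := by
  have : par Λ S ≤ Subgroup.centralizer {gen Λ x} := by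
    refine (Subgroup.closure_le _).2 ?_
    rintro _ ⟨v, hv, rfl⟩
    rw [SetLike.mem_coe, Subgroup.mem_centralizer_singleton_iff]
    exact (gen_comm Λ x v (h v hv)).eq.symm
  have := this hg
  rw [Subgroup.mem_centralizer_singleton_iff] at this
  exact this.symm

open Classical in
/-- Splitting a vertex into an edge induces an embedding. -/
theorem split_embeds {V : Type} (Λ : SimpleGraph V) (Γ : SimpleGraph (Option V)) (x : V)
    (h0 : ∀ v w, v ≠ x → w ≠ x → (Γ.Adj (some v) (some w) ↔ Λ.Adj v w))
    (h1 : Γ.Adj none (some x))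
    (h2 : ∀ v, v ≠ x → (Λ.Adj x v ↔ Γ.Adj none (some v) ∨ Γ.Adj (some x) (some v))) :
    ∃ φ : GG Λ →* GG Γ, Function.Injective φ := by
  set S₁ : Set V := {v | v ≠ x ∧ ¬ Γ.Adj none (some v)} with hS₁
  set S₂ : Set V := {v | v ≠ x ∧ ¬ Γ.Adj (some x) (some v)} with hS₂
  set C₁ := par Λ S₁
  set C₂ := par Λ S₂
  -- the embedding
  have hconj : ∀ v, v ≠ x → ¬ Λ.Adj x v → Commute
      ((gen Γ none)⁻¹ * gen Γ (some x) * gen Γ none) (gen Γ (some v)) := by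
    intro v hv hxv
    rw [h2 v hv, not_or] at hxv
    have e1 := gen_comm Γ _ _ hxv.1
    have e2 := gen_comm Γ _ _ hxv.2
    exact ((e1.inv_left.mul_left e2).mul_left e1)
  let φ : GG Λ →* GG Γ := ggLift Λ
    (fun v => if v = x then (gen Γ none)⁻¹ * gen Γ (some x) * gen Γ none else gen Γ (some v)) (by
      intro v w hne hvw
      split_ifs with hv hw hw
      · exact absurd (hv.trans hw.symm) hne
      · subst hv; exact hconj w hw hvw
      · subst hw; exact (hconj v hv (fun h => hvw h.symm)).symm
      · exact gen_comm _ _ _ (by rwa [h0 v w hv hw]))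
  -- the map to the HNN extension
  let α : GG Λ →* HN (C₁ ⊓ C₂) := ggLift Λ
    (fun v => if v = x then HNNExtension.t else HNNExtension.of (gen Λ v)) (by
      have aux : ∀ v, v ≠ x → ¬ Λ.Adj x v →
          Commute (HNNExtension.t : HN (C₁ ⊓ C₂)) (HNNExtension.of (gen Λ v)) := by
        intro v hv hxv
        rw [h2 v hv, not_or] at hxv
        exact t_comm _ _ ⟨gen_mem_par _ _ _ ⟨hv, hxv.1⟩, gen_mem_par _ _ _ ⟨hv, hxv.2⟩⟩
      intro v w hne hvw
      split_ifs with hv hw hw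
      · exact absurd (hv.trans hw.symm) hne
      · subst hv; exact aux w hw hvw
      · subst hw; exact (aux v hv (fun h => hvw h.symm)).symm
      · exact (gen_comm _ _ _ hvw).map _)
  let β : HN (C₁ ⊓ C₂) →* GG Λ := HNNExtension.lift (MonoidHom.id _) (gen Λ x) (by
    rintro ⟨a, ha⟩
    refine par_comm Λ (S₁ ∩ S₂) x ?_ a (par_inf _ _ _ ha)
    rintro v ⟨hv1, hv2⟩
    rw [h2 v hv1.1, not_or]
    exact ⟨hv1.2, hv2.2⟩)
  have hα : Function.Injective α := by
    have : β.comp α = MonoidHom.id _ := by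
      apply gg_ext
      intro v
      change β (α (gen Λ v)) = gen Λ v
      simp only [α, ggLift_gen]
      split_ifs with hv
      · simp only [β, HNNExtension.lift_t, hv]
      · simp only [β, HNNExtension.lift_of]; rfl
    intro a b hab
    have e := congrArg β hab
    have ha := DFunLike.congr_fun this a
    have hb := DFunLike.congr_fun this b
    exact ha.symm.trans (e.trans hb)
  -- the map from `GG Γ`
  let γ : GG Γ →* HH C₁ C₂ := ggLift Γ
    (fun o => match o with
      | none => s1 C₁ C₂
      | some v => if v = x then s2 C₁ C₂ else bb C₁ C₂ (gen Λ v)) (by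
    rintro (_ | v) (_ | w) hne hvw
    · exact absurd rfl hne
    · dsimp only
      split_ifs with hw
      · subst hw; exact absurd h1 hvw
      · exact s1_comm _ _ _ (gen_mem_par _ _ _ ⟨hw, hvw⟩)
    · dsimp only
      split_ifs with hw
      · subst hw; exact absurd h1.symm hvw
      · exact (s1_comm C₁ C₂ _ (gen_mem_par Λ S₁ _ ⟨hw, fun h => hvw h.symm⟩)).symm
    · dsimp only
      split_ifs with hv hw hw
      · exact absurd (by rw [hv, hw]) hne
      · subst hv; exact s2_comm _ _ _ (gen_mem_par _ _ _ ⟨hw, hvw⟩)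
      · subst hw; exact (s2_comm C₁ C₂ _ (gen_mem_par Λ S₂ _ ⟨hv, fun h => hvw h.symm⟩)).symm
      · exact (gen_comm _ _ _ (by rwa [← h0 v w hv hw])).map _)
  have hcomp : γ.comp φ = (psi C₁ C₂).comp α := by
    apply gg_ext
    intro v
    change γ (φ (gen Λ v)) = psi C₁ C₂ (α (gen Λ v))
    simp only [φ, α, ggLift_gen]
    split_ifs with hv
    · rw [map_mul, map_mul, map_inv]
      simp only [γ, ggLift_gen, if_true, psi, HNNExtension.lift_t]
    · simp only [γ, ggLift_gen, if_neg hv, psi_of]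
  refine ⟨φ, ?_⟩
  have : Function.Injective (γ.comp φ) := by
    rw [hcomp]
    exact (psi_injective C₁ C₂).comp hα
  exact Function.Injective.of_comp (f := γ) this

end RaagPart

section GraphPart

/-- split a vertex -/
def splitG {V : Type} (Λ : SimpleGraph V) (x : V) (N₁ N₂ : Set V) : SimpleGraph (Option V) where
  Adj p q := match p, q with
    | none, none => False
    | none, some v => v = x ∨ v ∈ N₁
    | some v, none => v = x ∨ v ∈ N₁
    | some v, some w => (v ≠ x ∧ w ≠ x ∧ Λ.Adj v w) ∨ (v = x ∧ w ≠ x ∧ w ∈ N₂) ∨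
        (w = x ∧ v ≠ x ∧ v ∈ N₂)
  symm := ⟨by
    rintro (_ | v) (_ | w) h
    · exact h
    · exact h
    · exact h
    · have := Λ.adj_comm v w
      dsimp only at h ⊢
      tauto⟩
  loopless := ⟨by
    rintro (_ | v) h
    · exact h
    · dsimp only at h
      have := Λ.irrefl (v := v)
      tauto⟩

lemma splitG_embeds {V : Type} (Λ : SimpleGraph V) (x : V) (N₁ N₂ : Set V)
    (h : ∀ v, v ≠ x → (Λ.Adj x v ↔ v ∈ N₁ ∨ v ∈ N₂)) :
    ∃ φ : GG Λ →* GG (splitG Λ x N₁ N₂), Function.Injective φ := by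
  refine split_embeds Λ _ x ?_ ?_ ?_
  · intro v w hv hw
    simp [splitG, hv, hw]
  · simp [splitG]
  · intro v hv
    simp [splitG, hv, h v hv]

/-- claw -/
structure Claw {V : Type} (Λ : SimpleGraph V) (v a b c : V) : Prop where
  ha : Λ.Adj v a
  hb : Λ.Adj v b
  hc : Λ.Adj v c
  hab : a ≠ b
  hac : a ≠ c
  hbc : b ≠ c
  nab : ¬ Λ.Adj a b
  nac : ¬ Λ.Adj a c
  nbc : ¬ Λ.Adj b c

/-- blow up a vertex to a triangle -/
def tri {V : Type} (Λ : SimpleGraph V) (x a b c : V) : SimpleGraph (Option (Option V)) :=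
  splitG (splitG Λ x {a} {b, c}) (some x) {none, some b} {none, some c}

/-- collapse -/
def coll {V : Type} (x : V) : Option (Option V) → V
  | none => x
  | some none => x
  | some (some v) => v

set_option maxHeartbeats 2000000 in
theorem main_aux (n : ℕ) : ∀ (V : Type) (_ : Fintype V) (Λ : SimpleGraph V),
    (∀ v a b c, Claw Λ v a b c → ∀ w, Λ.Adj v w → w = a ∨ w = b ∨ w = c) →
    {v | ∃ a b c, Claw Λ v a b c}.ncard = n →
    ∃ (W : Type) (_ : Fintype W) (Γ : SimpleGraph W),
      (∃ φ : GG Λ →* GG Γ, Function.Injective φ) ∧ ∀ v a b c, ¬ Claw Γ v a b c := by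
  induction n using Nat.strong_induction_on with
  | _ n ih =>
  intro V _ Λ hJ hn
  by_cases hclaw : ∃ x a b c, Claw Λ x a b c
  swap
  · exact ⟨V, inferInstance, Λ, ⟨MonoidHom.id _, Function.injective_id⟩,
      fun v a b c h => hclaw ⟨v, a, b, c, h⟩⟩
  obtain ⟨x, a, b, c, hx⟩ := hclaw
  have hN : ∀ w, Λ.Adj x w ↔ w = a ∨ w = b ∨ w = c := fun w =>
    ⟨hJ x a b c hx w, by rintro (rfl | rfl | rfl); exacts [hx.ha, hx.hb, hx.hc]⟩
  have hxa := hx.ha.ne'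
  have hxb := hx.hb.ne'
  have hxc := hx.hc.ne'
  obtain ⟨φ₁, hφ₁⟩ := splitG_embeds Λ x {a} {b, c} (by intro v _; simp [hN])
  obtain ⟨φ₂, hφ₂⟩ := splitG_embeds (splitG Λ x {a} {b, c}) (some x) {none, some b}
    {none, some c} (by
      rintro (_ | v) hv
      · simp [splitG]
      · have : v ≠ x := by simpa using hv
        simp [splitG, this])
  have hab := hx.hab
  have hac := hx.hac
  have hbc := hx.hbc
  have hsym : ∀ v w, Λ.Adj v w → Λ.Adj w v := fun v w h => h.symm
  have nab := hx.nab
  have nac := hx.nac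
  have nbc := hx.nbc
  have T01 : (tri Λ x a b c).Adj none (some none) := by simp [tri, splitG]
  have T02 : (tri Λ x a b c).Adj none (some (some x)) := by simp [tri, splitG]
  have T12 : (tri Λ x a b c).Adj (some none) (some (some x)) := by simp [tri, splitG]
  have N0 : ∀ p, (tri Λ x a b c).Adj none p →
      p = none ∨ p = some none ∨ p = some (some x) ∨ p = some (some b) := by
    rintro (_ | _ | p) h <;> simp [tri, splitG] at h ⊢
    exact h
  have N1 : ∀ p, (tri Λ x a b c).Adj (some none) p →
      p = none ∨ p = some none ∨ p = some (some x) ∨ p = some (some a) := by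
    rintro (_ | _ | p) h <;> simp [tri, splitG] at h ⊢
    tauto
  have N2 : ∀ p, (tri Λ x a b c).Adj (some (some x)) p →
      p = none ∨ p = some none ∨ p = some (some x) ∨ p = some (some c) := by
    rintro (_ | _ | p) h <;> simp [tri, splitG] at h ⊢
    tauto
  have P : ∀ v o p q, (∀ p, (tri Λ x a b c).Adj v p →
      p = none ∨ p = some none ∨ p = some (some x) ∨ p = o) →
      (tri Λ x a b c).Adj v p → (tri Λ x a b c).Adj v q → p ≠ q → ¬ (tri Λ x a b c).Adj p q →
      p = o ∨ q = o := by
    intro v o p q hN hp hq hne hpq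
    have T01' := T01.symm
    have T02' := T02.symm
    have T12' := T12.symm
    rcases hN p hp with rfl | rfl | rfl | h <;> rcases hN q hq with rfl | rfl | rfl | h' <;>
      first | exact absurd rfl hne | exact absurd ‹_› hpq | exact Or.inl h | exact Or.inr h'
  have K0 : ∀ v p q r, Claw (tri Λ x a b c) v p q r → ∃ v₀, v₀ ≠ x ∧ v = some (some v₀) := by
    rintro v p q r ⟨h1, h2, h3, h4, h5, h6, h7, h8, h9⟩
    rcases v with _ | _ | v
    · have := P none (some (some b)) p q N0 h1 h2 h4 h7
      have := P none (some (some b)) p r N0 h1 h3 h5 h8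
      have := P none (some (some b)) q r N0 h2 h3 h6 h9
      grind
    · have := P (some none) (some (some a)) p q N1 h1 h2 h4 h7
      have := P (some none) (some (some a)) p r N1 h1 h3 h5 h8
      have := P (some none) (some (some a)) q r N1 h2 h3 h6 h9
      grind
    · by_cases hv : v = x
      · subst hv
        have := P (some (some v)) (some (some c)) p q N2 h1 h2 h4 h7
        have := P (some (some v)) (some (some c)) p r N2 h1 h3 h5 h8
        have := P (some (some v)) (some (some c)) q r N2 h2 h3 h6 h9
        grind
      · exact ⟨v, hv, rfl⟩
  have K1 : ∀ v p, v ≠ x → (tri Λ x a b c).Adj (some (some v)) p → Λ.Adj v (coll x p) := by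
    rintro v (_ | _ | p) hv h
    all_goals
      clear T01 T02 T12 N0 N1 N2 P K0 hJ hn ih hφ₁ hφ₂
      simp [tri, splitG, coll, hv] at h ⊢
      try grind
  have K2 : ∀ v p q, v ≠ x → (tri Λ x a b c).Adj (some (some v)) p →
      (tri Λ x a b c).Adj (some (some v)) q → coll x p = coll x q → p = q := by
    rintro v (_ | _ | p) (_ | _ | q) hv h h'
    all_goals
      clear T01 T02 T12 N0 N1 N2 P K0 hJ hn ih hφ₁ hφ₂
      simp [tri, splitG, coll, hv] at h h' ⊢
      try grind
  have K3 : ∀ v p q, v ≠ x → (tri Λ x a b c).Adj (some (some v)) p →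
      (tri Λ x a b c).Adj (some (some v)) q → ¬ (tri Λ x a b c).Adj p q →
      ¬ Λ.Adj (coll x p) (coll x q) := by
    rintro v (_ | _ | p) (_ | _ | q) hv h h' h''
    all_goals
      clear T01 T02 T12 N0 N1 N2 P K0 hJ hn ih hφ₁ hφ₂
      simp [tri, splitG, coll, hv] at h h' h'' ⊢
      try grind
  have K4 : ∀ v p q r, v ≠ x → Claw (tri Λ x a b c) (some (some v)) p q r →
      Claw Λ v (coll x p) (coll x q) (coll x r) := by
    rintro v p q r hv ⟨h1, h2, h3, h4, h5, h6, h7, h8, h9⟩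
    exact ⟨K1 v p hv h1, K1 v q hv h2, K1 v r hv h3, fun h => h4 (K2 v p q hv h1 h2 h),
      fun h => h5 (K2 v p r hv h1 h3 h), fun h => h6 (K2 v q r hv h2 h3 h),
      K3 v p q hv h1 h2 h7, K3 v p r hv h1 h3 h8, K3 v q r hv h2 h3 h9⟩
  obtain ⟨W, hW, Γ, ⟨φ, hφ⟩, hΓ⟩ := ih {v | ∃ p q r, Claw (tri Λ x a b c) v p q r}.ncard (by
      rw [← hn]
      have hsub : {v | ∃ p q r, Claw (tri Λ x a b c) v p q r} ⊆
          (fun v => some (some v)) '' ({v | ∃ a b c, Claw Λ v a b c} \ {x}) := by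
        rintro v ⟨p, q, r, h⟩
        obtain ⟨v₀, hv₀, rfl⟩ := K0 v p q r h
        exact ⟨v₀, ⟨⟨_, _, _, K4 v₀ p q r hv₀ h⟩, hv₀⟩, rfl⟩
      refine (Set.ncard_le_ncard hsub (Set.toFinite _)).trans_lt ?_
      refine (Set.ncard_image_le (Set.toFinite _)).trans_lt ?_
      exact Set.ncard_sdiff_singleton_lt_of_mem ⟨a, b, c, hx⟩ (Set.toFinite _))
    (Option (Option V)) inferInstance (tri Λ x a b c) (by
      intro v p q r h w hw
      obtain ⟨v₀, hv₀, rfl⟩ := K0 v p q r h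
      rcases hJ v₀ _ _ _ (K4 v₀ p q r hv₀ h) _ (K1 v₀ w hv₀ hw) with h' | h' | h'
      · exact Or.inl (K2 v₀ _ _ hv₀ hw h.ha h')
      · exact Or.inr (Or.inl (K2 v₀ _ _ hv₀ hw h.hb h'))
      · exact Or.inr (Or.inr (K2 v₀ _ _ hv₀ hw h.hc h'))) rfl
  exact ⟨W, hW, Γ, ⟨φ.comp (φ₂.comp φ₁), hφ.comp (hφ₂.comp hφ₁)⟩, hΓ⟩

end GraphPart

/-- If `Λ` has maximum degree exactly 3 and the link of every degree-3 vertex contains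
no edge, then there is a finite graph `Γ` with `G(Λ) ↪ G(Γ)` but `Λ` not an induced
subgraph of `Γ`. -/
theorem statement17 {V : Type} [Fintype V] (Λ : SimpleGraph V)
    (hmax : ∀ v : V, (Λ.neighborSet v).ncard ≤ 3)
    (hthree : ∃ v : V, (Λ.neighborSet v).ncard = 3)
    (hlink : ∀ x : V, (Λ.neighborSet x).ncard = 3 →
      ∀ a b : V, Λ.Adj x a → Λ.Adj x b → ¬ Λ.Adj a b) :
    ∃ (W : Type) (_ : Fintype W) (Γ : SimpleGraph W),
      (∃ φ : GG Λ →* GG Γ, Function.Injective φ) ∧ ¬ Nonempty (Λ ↪g Γ) := by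
  obtain ⟨W, hW, Γ, hφ, hΓ⟩ := main_aux _ V inferInstance Λ (by
    intro v a b c h w hw
    have hs : ({a, b, c} : Set V) ⊆ Λ.neighborSet v := by
      rintro y (rfl | rfl | rfl)
      exacts [h.ha, h.hb, h.hc]
    have hc : ({a, b, c} : Set V).ncard = 3 :=
      Set.ncard_eq_three.2 ⟨a, b, c, h.hab, h.hac, h.hbc, rfl⟩
    have := Set.eq_of_subset_of_ncard_le hs (by rw [hc]; exact hmax v) (Set.toFinite _)
    have hw' : w ∈ Λ.neighborSet v := hw
    rw [← this] at hw'
    simpa using hw') rfl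
  refine ⟨W, hW, Γ, hφ, ?_⟩
  rintro ⟨f⟩
  obtain ⟨x, hx⟩ := hthree
  obtain ⟨a, b, c, hab, hac, hbc, he⟩ := Set.ncard_eq_three.1 hx
  have ha : Λ.Adj x a := by
    have : a ∈ Λ.neighborSet x := by simp [he]
    exact this
  have hb : Λ.Adj x b := by
    have : b ∈ Λ.neighborSet x := by simp [he]
    exact this
  have hc : Λ.Adj x c := by
    have : c ∈ Λ.neighborSet x := by simp [he]
    exact this
  refine hΓ (f x) (f a) (f b) (f c) ⟨?_, ?_, ?_, ?_, ?_, ?_, ?_, ?_, ?_⟩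
  · exact f.map_adj_iff.2 ha
  · exact f.map_adj_iff.2 hb
  · exact f.map_adj_iff.2 hc
  · exact fun h => hab (f.injective h)
  · exact fun h => hac (f.injective h)
  · exact fun h => hbc (f.injective h)
  · rw [f.map_adj_iff]; exact hlink x hx a b ha hb
  · rw [f.map_adj_iff]; exact hlink x hx a c ha hc
  · rw [f.map_adj_iff]; exact hlink x hx b c hb hc
end

section
/- Suppose Λ is a finite simple graph whose maximum vertex degree equals 3, and there exists a vertex u of degree 3 in Λ such that two neighbors of u are adjacent to each other (i.e., the link of u contains an edge). Then there exists a finite simple graph Γ such that there is an injective group homomorphism from G(Λ) into G(Γ), but Λ does not embed into Γ as a full (induced) subgraph. -/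
open SimpleGraph

namespace RaagWalk

open Classical

/-- The bipartite double cover of `Λ`. -/
def dbl {V : Type} (Λ : SimpleGraph V) : SimpleGraph (V × Bool) where
  Adj p q := Λ.Adj p.1 q.1 ∧ p.2 ≠ q.2
  symm := ⟨fun _ _ h => ⟨h.1.symm, h.2.symm⟩⟩
  loopless := ⟨fun _ h => h.2 rfl⟩

/-- The nilpotent operator attached to a vertex of the double cover, acting on functions
on (lists representing) walks. -/
noncomputable def NOp {V : Type} (Λ : SimpleGraph V) (p : V × Bool) :
    Module.End ℤ (List V → ℤ) where
  toFun f l := match l with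
    | [] => 0
    | z :: t => if z = p.1 ∧ Nat.bodd t.length = p.2 ∧ List.IsChain Λ.Adj (z :: t) then f t else 0
  map_add' f g := by
    ext l; cases l <;> simp
    split_ifs <;> simp
  map_smul' c f := by
    ext l; cases l <;> simp

lemma NOp_nil {V : Type} (Λ : SimpleGraph V) (p : V × Bool) (f : List V → ℤ) :
    NOp Λ p f [] = 0 := rfl

lemma NOp_cons {V : Type} (Λ : SimpleGraph V) (p : V × Bool) (f : List V → ℤ) (z : V)
    (t : List V) : NOp Λ p f (z :: t) =
      if z = p.1 ∧ Nat.bodd t.length = p.2 ∧ List.IsChain Λ.Adj (z :: t) then f t else 0 := rfl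

lemma NOp_mul {V : Type} (Λ : SimpleGraph V) (p q : V × Bool) (h : ¬ (dbl Λ).Adj p q) :
    NOp Λ p * NOp Λ q = 0 := by
  ext f l
  rw [Module.End.mul_apply]
  rcases l with _ | ⟨z, _ | ⟨y, t⟩⟩
  · rfl
  · rw [NOp_cons]; simp [NOp_nil]
  · rw [NOp_cons, NOp_cons]
    simp only [LinearMap.zero_apply, Pi.zero_apply]
    split_ifs with h1 h2
    · exfalso
      apply h
      obtain ⟨h1a, h1b, h1c⟩ := h1
      obtain ⟨h2a, h2b, h2c⟩ := h2
      refine ⟨?_, ?_⟩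
      · rw [← h1a, ← h2a]
        exact (List.isChain_cons_cons.1 h1c).1
      · rw [← h1b, ← h2b]; simp
    · rfl
    · rfl

/-- The unit `1 + N`. -/
noncomputable def unitOp {V : Type} (Λ : SimpleGraph V) (p : V × Bool) :
    (Module.End ℤ (List V → ℤ))ˣ where
  val := 1 + NOp Λ p
  inv := 1 - NOp Λ p
  val_inv := by
    have := NOp_mul Λ p p ((dbl Λ).loopless.irrefl p)
    rw [add_mul, mul_sub, mul_sub, this]; simp
  inv_val := by
    have := NOp_mul Λ p p ((dbl Λ).loopless.irrefl p)
    rw [sub_mul, mul_add, mul_add, this]; simp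

lemma unitOp_comm {V : Type} (Λ : SimpleGraph V) (p q : V × Bool) (h : ¬ (dbl Λ).Adj p q) :
    unitOp Λ p * unitOp Λ q = unitOp Λ q * unitOp Λ p := by
  ext1
  have h1 := NOp_mul Λ p q h
  have h2 := NOp_mul Λ q p (fun h' => h h'.symm)
  simp only [unitOp, Units.val_mul]
  rw [add_mul, mul_add, mul_add, h1, add_mul, mul_add, mul_add, h2]
  simp; abel

/-- The representation of `G(dbl Λ)`. -/
noncomputable def rep {V : Type} (Λ : SimpleGraph V) :
    GG (dbl Λ) →* (Module.End ℤ (List V → ℤ))ˣ :=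
  PresentedGroup.toGroup (f := unitOp Λ) (by
    rintro r ⟨p, q, hpq, rfl⟩
    have := unitOp_comm Λ p q ((compl_adj _ _ _).1 hpq).2
    simp [this])

lemma of_comm {V : Type} (G : SimpleGraph V) (p q : V) (h : p = q ∨ ¬ G.Adj p q) :
    Commute (PresentedGroup.of p : GG G) (PresentedGroup.of q) := by
  by_cases hpq : p = q
  · subst hpq; exact Commute.refl _
  · have hr : (FreeGroup.of p * FreeGroup.of q * (FreeGroup.of p)⁻¹ * (FreeGroup.of q)⁻¹) ∈
        raagRels Gᶜ := ⟨p, q, (compl_adj _ _ _).2 ⟨hpq, h.resolve_left hpq⟩, rfl⟩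
    have h1 := PresentedGroup.one_of_mem hr
    simp only [map_mul, map_inv] at h1
    have h2 := mul_inv_eq_one.1 h1
    exact mul_inv_eq_iff_eq_mul.1 h2

/-- The homomorphism `v ↦ (v,0)(v,1)`. -/
noncomputable def emb {V : Type} (Λ : SimpleGraph V) : GG Λ →* GG (dbl Λ) :=
  PresentedGroup.toGroup (f := fun v => (PresentedGroup.of (v, false) : GG (dbl Λ)) *
      PresentedGroup.of (v, true)) (by
    rintro r ⟨p, q, hpq, rfl⟩
    have hn := ((compl_adj _ _ _).1 hpq).2
    have key : ∀ s t, Commute (PresentedGroup.of (p, s) : GG (dbl Λ))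
        (PresentedGroup.of (q, t)) := fun s t => of_comm _ _ _ (Or.inr fun h => hn h.1)
    have := (Commute.mul_left ((key false false).mul_right (key false true))
      ((key true false).mul_right (key true true))).eq
    simp only [map_mul, map_inv, FreeGroup.lift_apply_of]
    rw [this]; group)

/-- The operator attached to a vertex of `Λ`. -/
noncomputable def MOp {V : Type} (Λ : SimpleGraph V) (v : V) : Module.End ℤ (List V → ℤ) :=
  NOp Λ (v, false) + NOp Λ (v, true)

lemma MOp_sq {V : Type} (Λ : SimpleGraph V) (v : V) : MOp Λ v * MOp Λ v = 0 := by
  have key : ∀ s t, NOp Λ (v, s) * NOp Λ (v, t) = 0 := fun s t =>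
    NOp_mul Λ _ _ (fun h => Λ.loopless.irrefl v h.1)
  simp [MOp, add_mul, mul_add, key]

lemma MOp_nil {V : Type} (Λ : SimpleGraph V) (v : V) (f : List V → ℤ) :
    MOp Λ v f [] = 0 := by simp [MOp, NOp_nil]

lemma MOp_cons {V : Type} (Λ : SimpleGraph V) (v : V) (f : List V → ℤ) (z : V)
    (t : List V) : MOp Λ v f (z :: t) =
      if z = v ∧ List.IsChain Λ.Adj (z :: t) then f t else 0 := by
  simp only [MOp, LinearMap.add_apply, Pi.add_apply, NOp_cons]
  cases Nat.bodd t.length <;> simp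

lemma comp_of {V : Type} (Λ : SimpleGraph V) (v : V) :
    ((rep Λ (emb Λ (PresentedGroup.of v)) : (Module.End ℤ (List V → ℤ))ˣ) :
      Module.End ℤ (List V → ℤ)) = 1 + MOp Λ v := by
  have key : NOp Λ (v, false) * NOp Λ (v, true) = 0 :=
    NOp_mul Λ _ _ (fun h => Λ.loopless.irrefl v h.1)
  simp only [emb, rep, PresentedGroup.toGroup.of, map_mul, Units.val_mul, unitOp, MOp]
  rw [add_mul, mul_add, mul_add, key]
  simp; abel

lemma unit_zpow {R : Type*} [Ring R] (x : Rˣ) (M : R) (hM : M * M = 0) (hx : (x : R) = 1 + M)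
    (n : ℤ) : ((x ^ n : Rˣ) : R) = 1 + n * M := by
  have hinv : ((x⁻¹ : Rˣ) : R) = 1 - M := by
    rw [Units.inv_eq_of_mul_eq_one_right]
    rw [hx, add_mul, mul_sub, mul_sub, hM]; simp
  induction n using Int.induction_on with
  | zero => simp
  | succ i ih =>
    rw [zpow_add_one, Units.val_mul, ih, hx, add_mul, mul_add, mul_add, mul_assoc _ M M, hM]
    push_cast
    simp [add_mul]; abel
  | pred i ih =>
    rw [zpow_sub_one, Units.val_mul, ih, hinv, add_mul, mul_sub, mul_sub, mul_assoc _ M M, hM]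
    push_cast
    simp [sub_mul]; abel

/-- Evaluation of a syllable list. -/
noncomputable def ev {V : Type} (Λ : SimpleGraph V) : List (V × ℤ) → GG Λ
  | [] => 1
  | (a, n) :: l => (PresentedGroup.of a : GG Λ) ^ n * ev Λ l

lemma ev_append {V : Type} (Λ : SimpleGraph V) (l m : List (V × ℤ)) :
    ev Λ (l ++ m) = ev Λ l * ev Λ m := by
  induction l with
  | nil => simp [ev]
  | cons x l ih => obtain ⟨a, n⟩ := x; simp [ev, ih, mul_assoc]

lemma ev_surj {V : Type} (Λ : SimpleGraph V) (g : GG Λ) : ∃ l, ev Λ l = g := by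
  have hg : g ∈ Subgroup.closure (Set.range (PresentedGroup.of (rels := raagRels Λᶜ))) := by
    rw [PresentedGroup.closure_range_of]; trivial
  induction hg using Subgroup.closure_induction'' with
  | one => exact ⟨[], rfl⟩
  | mem x hx => obtain ⟨v, rfl⟩ := hx; exact ⟨[(v, 1)], by simp [ev]⟩
  | inv_mem x hx => obtain ⟨v, rfl⟩ := hx; exact ⟨[(v, -1)], by simp [ev]⟩
  | mul x y _ _ hx hy =>
    obtain ⟨l, rfl⟩ := hx
    obtain ⟨m, rfl⟩ := hy
    exact ⟨l ++ m, ev_append Λ l m⟩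

section height
variable {V : Type} [Fintype V] (Λ : SimpleGraph V)

/-- Supremum of `h` over the neighbours of `a`. -/
noncomputable def nsup (h : V → ℕ) (a : V) : ℕ :=
  Finset.univ.sup (fun c => if Λ.Adj a c then h c else 0)

lemma le_nsup (h : V → ℕ) {a c : V} (hac : Λ.Adj a c) : h c ≤ nsup Λ h a := by
  have := Finset.le_sup (f := fun c => if Λ.Adj a c then h c else 0) (Finset.mem_univ c)
  simpa [hac, nsup] using this

lemma exists_nsup (h : V → ℕ) {a : V} {j : ℕ} (hj : nsup Λ h a = j + 1) :
    ∃ c, Λ.Adj a c ∧ h c = j + 1 := by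
  obtain ⟨c, -, hc⟩ := Finset.exists_mem_eq_sup Finset.univ ⟨a, Finset.mem_univ a⟩
    (fun c => if Λ.Adj a c then h c else 0)
  have h1 : nsup Λ h a = if Λ.Adj a c then h c else 0 := hc
  rw [hj] at h1
  split_ifs at h1 with h2
  exact ⟨c, h2, h1.symm⟩

/-- Height of the topmost letter `a` in the heap of a word. -/
noncomputable def ht : List (V × ℤ) → V → ℕ
  | [] => fun _ => 0
  | (b, _) :: l => fun a => if a = b then 1 + nsup Λ (ht l) b else ht l a

/-- Reduced words. -/
def Red : List (V × ℤ) → Prop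
  | [] => True
  | (a, n) :: l => n ≠ 0 ∧ ht Λ l a ≤ nsup Λ (ht Λ l) a ∧ Red l

lemma pull (a : V) (l : List (V × ℤ)) (h : nsup Λ (ht Λ l) a < ht Λ l a) :
    ∃ m l', l'.length + 1 = l.length ∧ ev Λ l = (PresentedGroup.of a : GG Λ) ^ (m : ℤ) * ev Λ l' := by
  induction l with
  | nil => simp [ht] at h
  | cons x l ih =>
    obtain ⟨b, k⟩ := x
    by_cases hab : a = b
    · subst hab; exact ⟨k, l, rfl, rfl⟩
    by_cases hadj : Λ.Adj a b
    · exfalso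
      have h1 := le_nsup Λ (ht Λ ((b, k) :: l)) hadj
      have h2 := le_nsup Λ (ht Λ l) hadj.symm
      simp only [ht, if_true, if_neg hab] at h h1
      omega
    · have h1 : nsup Λ (ht Λ ((b, k) :: l)) a = nsup Λ (ht Λ l) a := by
        unfold nsup
        congr 1
        ext c
        by_cases hc : Λ.Adj a c
        · have : c ≠ b := fun e => hadj (e ▸ hc)
          simp [hc, ht, this]
        · simp [hc]
      rw [h1] at h
      simp only [ht, if_neg hab] at h
      obtain ⟨m, l', hl, he⟩ := ih h
      refine ⟨m, (b, k) :: l', by simp [hl], ?_⟩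
      have hc := ((of_comm Λ b a (Or.inr fun h => hadj h.symm)).zpow_zpow k m).eq
      simp only [ev]
      rw [he, ← mul_assoc, hc, mul_assoc]

lemma red_of_min (l : List (V × ℤ))
    (hmin : ∀ l', ev Λ l' = ev Λ l → l.length ≤ l'.length) : Red Λ l := by
  induction l with
  | nil => trivial
  | cons x l ih =>
    obtain ⟨a, n⟩ := x
    refine ⟨?_, ?_, ih fun l' hl' => ?_⟩
    · rintro rfl
      have := hmin l (by simp [ev])
      simp at this
    · by_contra hlt
      obtain ⟨m, l', hl, he⟩ := pull Λ a l (not_le.1 hlt)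
      have := hmin ((a, n + m) :: l') (by simp [ev, he, zpow_add, mul_assoc])
      simp at this; omega
    · have := hmin ((a, n) :: l') (by simp [ev, hl'])
      simpa using this

lemma exists_red (g : GG Λ) : ∃ l, Red Λ l ∧ ev Λ l = g := by
  have hex : ∃ k, ∃ l, ev Λ l = g ∧ l.length = k := by
    obtain ⟨l, hl⟩ := ev_surj Λ g; exact ⟨_, l, hl, rfl⟩
  obtain ⟨l, hl, hk⟩ := Nat.find_spec hex
  refine ⟨l, red_of_min Λ l fun l' hl' => ?_, hl⟩
  rw [hk]
  exact Nat.find_min' hex ⟨l', hl'.trans hl, rfl⟩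

/-- Coefficient function of a word. -/
noncomputable def F : List (V × ℤ) → List V → ℤ
  | [] => fun t => if t = [] then 1 else 0
  | (a, n) :: l => F l + n • MOp Λ a (F l)

lemma F_eq (l : List (V × ℤ)) :
    (rep Λ (emb Λ (ev Λ l)) : Module.End ℤ (List V → ℤ)) (F Λ []) = F Λ l := by
  induction l with
  | nil => simp [ev]
  | cons x l ih =>
    obtain ⟨a, n⟩ := x
    have h := unit_zpow (rep Λ (emb Λ (PresentedGroup.of a))) _ (MOp_sq Λ a) (comp_of Λ a) n
    simp only [ev, map_mul, map_zpow, Units.val_mul, Module.End.mul_apply]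
    rw [ih, h]
    simp only [F, LinearMap.add_apply, Module.End.one_apply, Module.End.mul_apply]
    simp

lemma F_nil (l : List (V × ℤ)) : F Λ l [] = 1 := by
  induction l with
  | nil => simp [F]
  | cons x l ih => simp [F, ih, MOp_nil]

lemma F_cons (a : V) (n : ℤ) (l : List (V × ℤ)) (z : V) (t : List V) :
    F Λ ((a, n) :: l) (z :: t) = F Λ l (z :: t) +
      n * if z = a ∧ List.IsChain Λ.Adj (z :: t) then F Λ l t else 0 := by
  simp [F, MOp_cons]

lemma vanish (l : List (V × ℤ)) (hr : Red Λ l) (z : V) (t : List V)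
    (h : ht Λ l z < t.length + 1) : F Λ l (z :: t) = 0 := by
  induction l generalizing z t with
  | nil => simp [F]
  | cons x l ih =>
    obtain ⟨a, n⟩ := x
    obtain ⟨hn, hle, hr⟩ := hr
    rw [F_cons]
    by_cases hz : z = a
    · subst hz
      simp only [ht, if_true] at h
      rw [ih hr z t (by omega)]
      split_ifs with hc
      · rcases t with _ | ⟨y, t⟩
        · simp at h
        · have h1 := le_nsup Λ (ht Λ l) (List.isChain_cons_cons.1 hc.2).1
          simp only [List.length_cons] at h
          rw [ih hr y t (by omega)]; simp
      · simp
    · simp only [ht, if_neg hz] at h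
      simp [hz, ih hr z t h]

lemma nonvanish (l : List (V × ℤ)) (hr : Red Λ l) (a : V) (j : ℕ) (h : ht Λ l a = j + 1) :
    ∃ t : List V, t.length = j ∧ List.IsChain Λ.Adj (a :: t) ∧ F Λ l (a :: t) ≠ 0 := by
  induction l generalizing a j with
  | nil => simp [ht] at h
  | cons x l ih =>
    obtain ⟨b, n⟩ := x
    obtain ⟨hn, hle, hr⟩ := hr
    by_cases hab : a = b
    · subst hab
      simp only [ht, if_true] at h
      have key : ∀ t : List V, t.length = j → List.IsChain Λ.Adj (a :: t) → F Λ l t ≠ 0 →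
          F Λ ((a, n) :: l) (a :: t) ≠ 0 := by
        intro t ht' hc hF
        rw [F_cons, vanish Λ l hr a t (by omega)]
        simp [hc, hn, hF]
      rcases j with _ | j
      · exact ⟨[], rfl, by simp, key [] rfl (by simp) (by simp [F_nil])⟩
      · obtain ⟨c, hac, hc⟩ := exists_nsup Λ (ht Λ l) (a := a) (j := j) (by omega)
        obtain ⟨t, h1, h2, h3⟩ := ih hr c j hc
        have h4 : List.IsChain Λ.Adj (a :: c :: t) := List.isChain_cons_cons.2 ⟨hac, h2⟩
        exact ⟨c :: t, by simp [h1], h4, key _ (by simp [h1]) h4 h3⟩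
    · simp only [ht, if_neg hab] at h
      obtain ⟨t, h1, h2, h3⟩ := ih hr a j h
      refine ⟨t, h1, h2, ?_⟩
      rw [F_cons]
      simpa [hab] using h3

lemma emb_injective : Function.Injective (emb Λ) := by
  rw [injective_iff_map_eq_one]
  intro g hg
  obtain ⟨l, hr, rfl⟩ := exists_red Λ g
  rcases l with _ | ⟨⟨a, n⟩, l⟩
  · rfl
  · exfalso
    obtain ⟨t, -, -, h3⟩ := nonvanish Λ ((a, n) :: l) hr a (nsup Λ (ht Λ l) a)
      (by simp [ht, add_comm])
    rw [← F_eq, hg] at h3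
    simp [F] at h3

end height

end RaagWalk

/-- If `Λ` has maximum degree exactly 3 and some degree-3 vertex `u` has two adjacent
neighbours, then there is a finite graph `Γ` with `G(Λ) ↪ G(Γ)` but `Λ` not an induced
subgraph of `Γ`. -/
theorem statement18 {V : Type} [Fintype V] (Λ : SimpleGraph V)
    (hmax : ∀ v : V, (Λ.neighborSet v).ncard ≤ 3)
    (hu : ∃ u : V, (Λ.neighborSet u).ncard = 3 ∧
      ∃ a b : V, Λ.Adj u a ∧ Λ.Adj u b ∧ Λ.Adj a b) :
    ∃ (W : Type) (_ : Fintype W) (Γ : SimpleGraph W),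
      (∃ φ : GG Λ →* GG Γ, Function.Injective φ) ∧ ¬ Nonempty (Λ ↪g Γ) := by
  obtain ⟨u, -, a, b, hua, hub, hab⟩ := hu
  refine ⟨V × Bool, inferInstance, RaagWalk.dbl Λ,
    ⟨RaagWalk.emb Λ, RaagWalk.emb_injective Λ⟩, ?_⟩
  rintro ⟨f⟩
  have h1 := (f.map_adj_iff.2 hua).2
  have h2 := (f.map_adj_iff.2 hub).2
  have h3 := (f.map_adj_iff.2 hab).2
  revert h1 h2 h3
  cases (f u).2 <;> cases (f a).2 <;> cases (f b).2 <;> simp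
end
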